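/- arXiv:1808.04484 — 5 statements merged into one kernel-verified Lean document; each statement's English description precedes it below -/
import Mathlib

section
/- Let 𝒢 = (G,p,θ,τ) be a well-positioned Γ-symmetric bar-joint framework in X. Then: (G,p) is full if and only if 𝒢 is χ-symmetrically full for every χ ∈ Γ̂; (G,p) is infinitesimally rigid if and only if 𝒢 is χ-symmetrically infinitesimally rigid for every χ ∈ Γ̂; (G,p) is independent if and only if 𝒢 is χ-symmetrically independent for every χ ∈ Γ̂; and (G,p) is isostatic if and only if 𝒢 is χ-symmetrically isostatic for every χ ∈ Γ̂. -/
/-!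
Statement 4 (Corollary 2.9 / lem:SymRigid): a well-positioned `Γ`-symmetric framework
is full (resp. infinitesimally rigid, independent, isostatic) iff it is
`χ`-symmetrically full (resp. rigid, independent, isostatic) for every character `χ`.
-/

open scoped TensorProduct

namespace Stmt4

variable {V : Type} [Fintype V] [DecidableEq V]
variable {X : Type} [NormedAddCommGroup X] [NormedSpace ℝ X]
variable {Γ : Type} [CommGroup Γ] [Fintype Γ]

noncomputable def fG (G : SimpleGraph V) [Fintype G.edgeSet] (x : V → X) (e : G.edgeSet) : ℝ :=
  Sym2.lift ⟨fun v w => ‖x v - x w‖, fun v w => by simp only []; rw [norm_sub_rev]⟩ e.1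

noncomputable def WellPositioned (G : SimpleGraph V) [Fintype G.edgeSet] (p : V → X) : Prop :=
  DifferentiableAt ℝ (fG G) p

noncomputable def dfR (G : SimpleGraph V) [Fintype G.edgeSet] (p : V → X) :
    (V → X) →L[ℝ] (G.edgeSet → ℝ) :=
  fderiv ℝ (fG G) p

noncomputable def phiEdge (G : SimpleGraph V) [Fintype G.edgeSet] (p : V → X)
    (e : G.edgeSet) (v : V) : X →ₗ[ℝ] ℝ :=
  (LinearMap.proj (R := ℝ) (φ := fun _ : G.edgeSet => ℝ) e).comp
    ((dfR G p).toLinearMap.comp (LinearMap.single ℝ (fun _ : V => X) v))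

noncomputable def cplxFunctional (f : X →ₗ[ℝ] ℝ) : (ℂ ⊗[ℝ] X) →ₗ[ℂ] ℂ :=
  LinearMap.liftBaseChange ℂ ((Complex.ofRealCLM.toLinearMap).comp f)

/-- The complex-linear extension of `df_G(p)`. -/
noncomputable def dfC (G : SimpleGraph V) [Fintype G.edgeSet] (p : V → X) :
    (V → ℂ ⊗[ℝ] X) →ₗ[ℂ] (G.edgeSet → ℂ) :=
  LinearMap.pi fun e : G.edgeSet =>
    ∑ v : V, (cplxFunctional (phiEdge G p e v)).comp
      (LinearMap.proj (R := ℂ) (φ := fun _ : V => ℂ ⊗[ℝ] X) v)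

def edgeAct (G : SimpleGraph V) (θ : Γ →* Equiv.Perm V)
    (hadj : ∀ (γ : Γ) (u v : V), G.Adj u v ↔ G.Adj (θ γ u) (θ γ v))
    (γ : Γ) (e : G.edgeSet) : G.edgeSet :=
  ⟨Sym2.map (θ γ) e.1, by
    obtain ⟨e, he⟩ := e
    induction e using Sym2.ind with
    | _ u v => simpa using (hadj γ u v).1 (by simpa using he)⟩

noncomputable def tauC (τ : Γ →* (X ≃ₗᵢ[ℝ] X)) (γ : Γ) :
    (ℂ ⊗[ℝ] X) →ₗ[ℂ] (ℂ ⊗[ℝ] X) :=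
  LinearMap.baseChange ℂ ((τ γ).toLinearEquiv.toLinearMap)

noncomputable def Xchi (θ : Γ →* Equiv.Perm V) (τ : Γ →* (X ≃ₗᵢ[ℝ] X)) (χ : Γ →* ℂ) :
    Submodule ℂ (V → ℂ ⊗[ℝ] X) :=
  ⨅ (γ : Γ), ⨅ (v : V),
    LinearMap.ker
      ((LinearMap.proj (R := ℂ) (φ := fun _ : V => ℂ ⊗[ℝ] X) (θ γ v)) -
        χ γ • ((tauC τ γ).comp (LinearMap.proj (R := ℂ) (φ := fun _ : V => ℂ ⊗[ℝ] X) v)))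

noncomputable def Ychi (G : SimpleGraph V) (θ : Γ →* Equiv.Perm V)
    (hadj : ∀ (γ : Γ) (u v : V), G.Adj u v ↔ G.Adj (θ γ u) (θ γ v)) (χ : Γ →* ℂ) :
    Submodule ℂ (G.edgeSet → ℂ) :=
  ⨅ (γ : Γ), ⨅ (e : G.edgeSet),
    LinearMap.ker
      ((LinearMap.proj (R := ℂ) (φ := fun _ : G.edgeSet => ℂ) (edgeAct G θ hadj γ e)) -
        χ γ • (LinearMap.proj (R := ℂ) (φ := fun _ : G.edgeSet => ℂ) e))

def IsRigidMotion (α : X → ℝ → X) : Prop :=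
  (∀ x : X, ContinuousOn (α x) (Set.Icc (-1 : ℝ) 1)) ∧
    (∀ x : X, α x 0 = x) ∧
    (∀ x y : X, ∀ t ∈ Set.Icc (-1 : ℝ) 1, ‖α x t - α y t‖ = ‖x - y‖)

def IsInfRigidMotion (η : X → X) : Prop :=
  ∃ α : X → ℝ → X, IsRigidMotion α ∧ ∀ x : X, HasDerivAt (α x) (η x) 0

noncomputable def TXC (X : Type) [NormedAddCommGroup X] [NormedSpace ℝ X] :
    Submodule ℂ (X → ℂ ⊗[ℝ] X) :=
  Submodule.span ℂ
    {η' | ∃ η : X → X, IsInfRigidMotion η ∧ η' = fun x => (1 : ℂ) ⊗ₜ[ℝ] η x}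

noncomputable def Tchi (τ : Γ →* (X ≃ₗᵢ[ℝ] X)) (χ : Γ →* ℂ) :
    Submodule ℂ (X → ℂ ⊗[ℝ] X) :=
  TXC X ⊓
    ⨅ (γ : Γ), ⨅ (x : X),
      LinearMap.ker
        ((LinearMap.proj (R := ℂ) (φ := fun _ : X => ℂ ⊗[ℝ] X) (τ γ x)) -
          χ γ • ((tauC τ γ).comp (LinearMap.proj (R := ℂ) (φ := fun _ : X => ℂ ⊗[ℝ] X) x)))

/-- The complexified restriction map `ρ_{(G,p)} : 𝒯(X;ℂ) → (X_ℂ)^V`. -/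
noncomputable def rhoC (p : V → X) : (X → ℂ ⊗[ℝ] X) →ₗ[ℂ] (V → ℂ ⊗[ℝ] X) :=
  LinearMap.pi fun v : V => LinearMap.proj (R := ℂ) (φ := fun _ : X => ℂ ⊗[ℝ] X) (p v)

/-- Exactness of the (real) framework complex at `𝒯(X)`. -/
def Full (G : SimpleGraph V) [Fintype G.edgeSet] (p : V → X) : Prop :=
  ∀ η : X → X, IsInfRigidMotion η → (∀ v : V, η (p v) = 0) → η = fun _ => 0

/-- Exactness of the (real) framework complex at `X^V`. -/
noncomputable def InfRigid (G : SimpleGraph V) [Fintype G.edgeSet] (p : V → X) : Prop :=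
  ∀ u : V → X, dfR G p u = 0 → ∃ η : X → X, IsInfRigidMotion η ∧ ∀ v : V, η (p v) = u v

/-- Exactness of the (real) framework complex at `ℝ^E`. -/
noncomputable def Independent (G : SimpleGraph V) [Fintype G.edgeSet] (p : V → X) : Prop :=
  Function.Surjective (dfR G p)

noncomputable def Isostatic (G : SimpleGraph V) [Fintype G.edgeSet] (p : V → X) : Prop :=
  InfRigid G p ∧ Independent G p

/-- `χ`-symmetrically full: `ρ_χ(𝒢)` is injective. -/
noncomputable def ChiFull (G : SimpleGraph V) [Fintype G.edgeSet] (p : V → X)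
    (τ : Γ →* (X ≃ₗᵢ[ℝ] X)) (χ : Γ →* ℂ) : Prop :=
  ∀ η ∈ Tchi τ χ, rhoC (V := V) p η = 0 → η = 0

/-- `χ`-symmetrically infinitesimally rigid: `ker R_χ(𝒢) ⊆ im ρ_χ(𝒢)`. -/
noncomputable def ChiRigid (G : SimpleGraph V) [Fintype G.edgeSet] (p : V → X)
    (θ : Γ →* Equiv.Perm V) (τ : Γ →* (X ≃ₗᵢ[ℝ] X)) (χ : Γ →* ℂ) : Prop :=
  ∀ u ∈ Xchi θ τ χ, dfC G p u = 0 → ∃ η ∈ Tchi τ χ, rhoC (V := V) p η = u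

/-- `χ`-symmetrically independent: `R_χ(𝒢)` is surjective onto `Y_χ`. -/
noncomputable def ChiIndependent (G : SimpleGraph V) [Fintype G.edgeSet] (p : V → X)
    (θ : Γ →* Equiv.Perm V)
    (hadj : ∀ (γ : Γ) (u v : V), G.Adj u v ↔ G.Adj (θ γ u) (θ γ v))
    (τ : Γ →* (X ≃ₗᵢ[ℝ] X)) (χ : Γ →* ℂ) : Prop :=
  ∀ y ∈ Ychi G θ hadj χ, ∃ u ∈ Xchi θ τ χ, dfC G p u = y

noncomputable def ChiIsostatic (G : SimpleGraph V) [Fintype G.edgeSet] (p : V → X)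
    (θ : Γ →* Equiv.Perm V)
    (hadj : ∀ (γ : Γ) (u v : V), G.Adj u v ↔ G.Adj (θ γ u) (θ γ v))
    (τ : Γ →* (X ≃ₗᵢ[ℝ] X)) (χ : Γ →* ℂ) : Prop :=
  ChiRigid G p θ τ χ ∧ ChiIndependent G p θ hadj τ χ

/-!
The framework complex is a complex of representations of `Γ`: `γ` acts on fields by
`u ↦ τ(γ)⁻¹ u(θ(γ) ·)` and on functions of the edges by permutation. Restriction to the vertices
is equivariant because `τ(γ) p_v = p_{γv}`, and so is `df_G(p)`, by the chain rule, because the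
edge-length map is equivariant and `p` is a fixed point of the action. Averaging against the
characters of `Γ` splits every invariant complex subspace into its `χ`-parts, and the image of an
invariant subspace under an equivariant map has as `χ`-part the image of the `χ`-part. Exactness
over `ℂ` is therefore equivalent to exactness of all `χ`-parts, and it is equivalent to exactness
over `ℝ` by taking real and imaginary parts.

Real and imaginary parts of an element of `𝒯(X;ℂ)` are infinitesimal rigid motions because these
form a vector space: if `α` and `β` are rigid motions with derivatives `η` and `ζ`, then
`t ↦ α_t ∘ β_t` is a rigid motion with derivative `η + ζ`. The derivative exists because `α_t` is
affine, by the Mazur–Ulam theorem; that theorem needs `α_t` to be onto, which compactness of closed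
balls provides.
-/

section Isometry

theorem exists_dist_iterate_succ_lt_of_isometry {M : Type*} [PseudoMetricSpace M] [CompactSpace M]
    {f : M → M} (hf : Isometry f) (y : M) {ε : ℝ} (hε : 0 < ε) :
    ∃ n : ℕ, dist (f^[n + 1] y) y < ε := by
  obtain ⟨a, φ, hφ, hlim⟩ := CompactSpace.tendsto_subseq fun n => f^[n] y
  obtain ⟨N, hN⟩ := Metric.cauchySeq_iff'.1 hlim.cauchySeq ε hε
  obtain ⟨n, hn⟩ := Nat.exists_eq_add_of_lt (hφ N.lt_succ_self)
  have hdist : dist (f^[φ N + (n + 1)] y) (f^[φ N] y) < ε := by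
    simpa only [Function.comp_apply, hn, add_assoc] using hN (N + 1) N.le_succ
  have hiter : ∀ k, Isometry f^[k] := Nat.rec isometry_id fun _ ih => ih.comp hf
  rw [Function.iterate_add_apply, (hiter (φ N)).dist_eq] at hdist
  exact ⟨n, hdist⟩

theorem surjective_of_isometry_of_compactSpace {M : Type*} [MetricSpace M] [CompactSpace M]
    {f : M → M} (hf : Isometry f) : Function.Surjective f := by
  intro y
  have hclosed : IsClosed (Set.range f) := hf.isClosedEmbedding.isClosed_range
  refine hclosed.closure_subset (Metric.mem_closure_range_iff.2 fun ε hε => ?_)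
  obtain ⟨n, hn⟩ := exists_dist_iterate_succ_lt_of_isometry hf y hε
  exact ⟨f^[n] y, by rwa [← Function.iterate_succ_apply' f, dist_comm]⟩

theorem surjective_of_isometry_of_isFixedPt {M : Type*} [MetricSpace M] [ProperSpace M]
    {f : M → M} (hf : Isometry f) {c : M} (hc : Function.IsFixedPt f c) :
    Function.Surjective f := by
  intro y
  let B : Set M := Metric.closedBall c (dist y c)
  have hmaps : Set.MapsTo f B B := fun x hx => by
    rwa [Metric.mem_closedBall, ← congrArg (dist (f x)) hc.eq, hf.dist_eq]
  have : CompactSpace B := isCompact_iff_compactSpace.1 (isCompact_closedBall c _)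
  have hiso : Isometry (hmaps.restrict f B B) := fun a b => hf a b
  obtain ⟨x, hx⟩ := surjective_of_isometry_of_compactSpace hiso ⟨y, Metric.mem_closedBall.2 le_rfl⟩
  exact ⟨x, congrArg Subtype.val hx⟩

variable {E : Type*} [NormedAddCommGroup E] [ProperSpace E]

theorem surjective_of_isometry {f : E → E} (hf : Isometry f) : Function.Surjective f := by
  have hg : Function.Surjective fun x => f x - f 0 :=
    surjective_of_isometry_of_isFixedPt (c := 0)
      (Isometry.of_dist_eq fun x y => by rw [dist_sub_right, hf.dist_eq]) (sub_self _)
  intro y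
  obtain ⟨x, hx⟩ := hg (y - f 0)
  exact ⟨x, sub_left_injective hx⟩

theorem exists_linearIsometry_of_isometry [NormedSpace ℝ E] {f : E → E} (hf : Isometry f) :
    ∃ A : E →ₗᵢ[ℝ] E, ∀ x y, f x - f y = A (x - y) := by
  let e : E ≃ᵢ E := .mk (.ofBijective f ⟨hf.injective, surjective_of_isometry hf⟩) hf
  refine ⟨e.toRealLinearIsometryEquiv.toLinearIsometry, fun x y => ?_⟩
  have he : ∀ z, e z = f z := fun _ => rfl
  simp [map_sub, he]

end Isometry

section RigidMotion

omit [NormedSpace ℝ X]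

variable {α β : X → ℝ → X}

theorem IsRigidMotion.apply_zero (hα : IsRigidMotion α) (x : X) : α x 0 = x :=
  hα.2.1 x

theorem IsRigidMotion.norm_sub (hα : IsRigidMotion α) {t : ℝ} (ht : t ∈ Set.Icc (-1 : ℝ) 1)
    (x y : X) : ‖α x t - α y t‖ = ‖x - y‖ :=
  hα.2.2 x y t ht

theorem IsRigidMotion.continuousOn_uncurry (hα : IsRigidMotion α) :
    ContinuousOn (Function.uncurry α) (Set.univ ×ˢ Set.Icc (-1) 1) :=
  continuousOn_prod_of_continuousOn_lipschitzOnWith (Function.uncurry α) 1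
    (fun x _ => hα.1 x) fun t ht => LipschitzWith.lipschitzOnWith <| .of_dist_le_mul fun x y => by
      simpa [dist_eq_norm] using (hα.norm_sub ht x y).le

theorem IsRigidMotion.tendsto_comp (hα : IsRigidMotion α) {l : Filter ℝ} (hl : l ≤ nhds 0)
    {c : ℝ → X} {y : X} (hc : Filter.Tendsto c l (nhds y)) :
    Filter.Tendsto (fun t => α (c t) t) l (nhds y) := by
  have hcont : ContinuousAt (Function.uncurry α) (y, 0) :=
    hα.continuousOn_uncurry.continuousAt <|
      prod_mem_nhds Filter.univ_mem (Icc_mem_nhds (by norm_num) one_pos)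
  have hlim := hcont.tendsto.comp (hc.prodMk_nhds (Filter.tendsto_id.mono_left hl))
  rwa [Function.uncurry_apply_pair, hα.apply_zero] at hlim

theorem IsRigidMotion.comp (hα : IsRigidMotion α) (hβ : IsRigidMotion β) :
    IsRigidMotion fun x t => α (β x t) t := by
  refine ⟨fun x => ?_, fun x => ?_, fun x y t ht => ?_⟩
  · exact hα.continuousOn_uncurry.comp ((hβ.1 x).prodMk continuousOn_id)
      fun t ht => ⟨Set.mem_univ _, ht⟩
  · simp only [hβ.apply_zero, hα.apply_zero]
  · rw [hα.norm_sub ht, hβ.norm_sub ht]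

theorem IsRigidMotion.reparametrize (hα : IsRigidMotion α) {s : ℝ → ℝ} (hs : Continuous s)
    (hs_mem : ∀ t, s t ∈ Set.Icc (-1 : ℝ) 1) (hs_zero : s 0 = 0) :
    IsRigidMotion fun x t => α x (s t) :=
  ⟨fun x => (hα.1 x).comp hs.continuousOn fun t _ => hs_mem t,
    fun x => by simp only [hs_zero, hα.apply_zero], fun x y t _ => hα.norm_sub (hs_mem t) x y⟩

end RigidMotion

section InfRigidMotion

variable {α : X → ℝ → X} {η ζ : X → X}

theorem IsRigidMotion.conj (hα : IsRigidMotion α) (T : X ≃ₗᵢ[ℝ] X) :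
    IsRigidMotion fun x t => T.symm (α (T x) t) := by
  refine ⟨fun x => T.symm.continuous.comp_continuousOn (hα.1 (T x)), fun x => ?_,
    fun x y t ht => ?_⟩
  · simp only [hα.apply_zero, T.symm_apply_apply]
  · rw [← map_sub, T.symm.norm_map, hα.norm_sub ht, ← map_sub, T.norm_map]

theorem IsRigidMotion.exists_linearIsometry [FiniteDimensional ℝ X] (hα : IsRigidMotion α)
    {t : ℝ} (ht : t ∈ Set.Icc (-1 : ℝ) 1) :
    ∃ A : X →ₗᵢ[ℝ] X, ∀ x y, α x t - α y t = A (x - y) :=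
  have := FiniteDimensional.proper ℝ X
  exists_linearIsometry_of_isometry <| .of_dist_eq fun x y => by
    simpa only [dist_eq_norm] using hα.norm_sub ht x y

theorem IsRigidMotion.slope_comp [FiniteDimensional ℝ X] (hα : IsRigidMotion α) {b : ℝ → X}
    {t : ℝ} (ht : t ∈ Set.Icc (-1 : ℝ) 1) :
    slope (fun s => α (b s) s) 0 t =
      slope (α (b 0)) 0 t + (α (b 0 + slope b 0 t) t - α (b 0) t) := by
  obtain ⟨A, hA⟩ := hα.exists_linearIsometry ht
  rw [hA, add_sub_cancel_left]
  simp only [slope_def_module, map_smul]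
  rw [← hA, ← smul_add, add_comm, sub_add_sub_cancel]

theorem IsRigidMotion.hasDerivAt_comp [FiniteDimensional ℝ X] (hα : IsRigidMotion α)
    {b : ℝ → X} {v w : X} (hb : HasDerivAt b v 0) (hw : HasDerivAt (α (b 0)) w 0) :
    HasDerivAt (fun t => α (b t) t) (w + v) 0 := by
  rw [hasDerivAt_iff_tendsto_slope] at hb hw ⊢
  have hlim : Filter.Tendsto
      (fun t => slope (α (b 0)) 0 t + (α (b 0 + slope b 0 t) t - α (b 0) t))
      (nhdsWithin 0 {0}ᶜ) (nhds (w + (b 0 + v - b 0))) :=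
    hw.add <| (hα.tendsto_comp nhdsWithin_le_nhds (hb.const_add (b 0))).sub
      (hα.tendsto_comp nhdsWithin_le_nhds tendsto_const_nhds)
  rw [add_sub_cancel_left] at hlim
  refine hlim.congr' ?_
  filter_upwards [nhdsWithin_le_nhds (Icc_mem_nhds (by norm_num : (-1 : ℝ) < 0) one_pos)]
    with t ht
  exact (hα.slope_comp ht).symm

theorem IsInfRigidMotion.zero : IsInfRigidMotion fun _ : X => (0 : X) :=
  ⟨fun x _ => x, ⟨fun _ => continuousOn_const, fun _ => rfl, fun _ _ _ _ => rfl⟩,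
    fun x => hasDerivAt_const 0 x⟩

theorem IsInfRigidMotion.add [FiniteDimensional ℝ X] (hη : IsInfRigidMotion η)
    (hζ : IsInfRigidMotion ζ) : IsInfRigidMotion (η + ζ) := by
  obtain ⟨α, hα, hαη⟩ := hη
  obtain ⟨β, hβ, hβζ⟩ := hζ
  refine ⟨_, hα.comp hβ, fun x => hα.hasDerivAt_comp (hβζ x) ?_⟩
  simpa only [hβ.apply_zero] using hαη x

theorem IsInfRigidMotion.smul (hη : IsInfRigidMotion η) (c : ℝ) : IsInfRigidMotion (c • η) := by
  obtain ⟨α, hα, hαη⟩ := hη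
  -- Rescaled time `c * t` must be clamped to the interval on which `α` is a rigid motion.
  let s : ℝ → ℝ := fun t => max (-1) (min 1 (c * t))
  have hs_mem : ∀ t, s t ∈ Set.Icc (-1 : ℝ) 1 := fun t =>
    ⟨le_max_left _ _, max_le (by norm_num) (min_le_left _ _)⟩
  have hs_zero : s 0 = 0 := by simp [s]
  have hs_near : s =ᶠ[nhds 0] fun t => c * t := by
    have hnear : ∀ᶠ t in nhds (0 : ℝ), c * t ∈ Set.Icc (-1 : ℝ) 1 :=
      ContinuousAt.eventually_mem (by fun_prop) (Icc_mem_nhds (by simp) (by simp))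
    filter_upwards [hnear] with t ht
    simp only [s, min_eq_right ht.2, max_eq_right ht.1]
  have hs_deriv : HasDerivAt s c 0 :=
    (hasDerivAt_const_mul c).congr_of_eventuallyEq hs_near
  exact ⟨_, hα.reparametrize (by fun_prop) hs_mem hs_zero,
    fun x => (hs_zero.symm ▸ hαη x).scomp 0 hs_deriv⟩

theorem IsInfRigidMotion.conj (hη : IsInfRigidMotion η) (T : X ≃ₗᵢ[ℝ] X) :
    IsInfRigidMotion fun x => T.symm (η (T x)) := by
  obtain ⟨α, hα, hαη⟩ := hη
  exact ⟨_, hα.conj T, fun x => T.symm.toContinuousLinearEquiv.hasFDerivAt.comp_hasDerivAt 0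
    (hαη (T x))⟩

end InfRigidMotion

open scoped Classical in
theorem sum_monoidHom_units_apply {k H : Type*} [CommRing k] [IsDomain k] [CommGroup H] [Finite H]
    [HasEnoughRootsOfUnity k (Monoid.exponent H)] [Fintype (H →* kˣ)] (h : H) :
    ∑ ψ : H →* kˣ, (ψ h : k) = if h = 1 then (Nat.card H : k) else 0 := by
  split_ifs with hh
  · simp [hh, ← Nat.card_eq_fintype_card, CommGroup.card_monoidHom_of_hasEnoughRootsOfUnity H k]
  · obtain ⟨φ, hφ⟩ := CommGroup.exists_apply_ne_one_of_hasEnoughRootsOfUnity H k hh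
    refine eq_zero_of_mul_eq_self_left (Units.val_eq_one.not.2 hφ) ?_
    rw [Finset.mul_sum]
    exact Fintype.sum_bijective _ (Group.mulLeft_bijective φ) _ _ fun ψ => rfl

section CharEigenspace

variable {k H M N : Type*} [CommRing k] [Monoid H] [AddCommGroup M] [Module k M]
  [AddCommGroup N] [Module k N] {ρ : Representation k H M} {σ : Representation k H N}

/-- The isotypic part of a representation for a character `χ`, that is, the simultaneous
eigenspace of all `ρ h` with eigenvalues `χ h`. -/
def charEigenspace (ρ : Representation k H M) (χ : H →* k) : Submodule k M :=
  ⨅ h, Module.End.eigenspace (ρ h) (χ h)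

theorem mem_charEigenspace {χ : H →* k} {m : M} :
    m ∈ charEigenspace ρ χ ↔ ∀ h, ρ h m = χ h • m := by
  simp only [charEigenspace, Submodule.mem_iInf, Module.End.mem_eigenspace_iff]

theorem map_mem_charEigenspace {f : M →ₗ[k] N} (hf : ρ.IsIntertwiningMap σ f) {χ : H →* k}
    {m : M} (hm : m ∈ charEigenspace ρ χ) : f m ∈ charEigenspace σ χ :=
  mem_charEigenspace.2 fun h => by
    rw [← hf.isIntertwining, mem_charEigenspace.1 hm, map_smul]

theorem ker_mem_invtSubmodule {f : M →ₗ[k] N} (hf : ρ.IsIntertwiningMap σ f) :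
    LinearMap.ker f ∈ ρ.invtSubmodule :=
  ρ.mem_invtSubmodule.2 fun h m (hm : f m = 0) => by
    simp only [Submodule.mem_comap, LinearMap.mem_ker, hf.isIntertwining, hm, map_zero]

end CharEigenspace

section CharProj

variable {k H M N : Type*} [Field k] [CommGroup H] [Fintype H] [AddCommGroup M] [Module k M]
  [AddCommGroup N] [Module k N] {ρ : Representation k H M} {σ : Representation k H N}

/-- The projection onto `charEigenspace ρ χ` obtained by averaging `χ⁻¹ • ρ` over the group. -/
noncomputable def charProj (ρ : Representation k H M) (χ : H →* k) : M →ₗ[k] M :=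
  (Nat.card H : k)⁻¹ • ∑ h, χ h⁻¹ • ρ h

theorem charProj_apply (ρ : Representation k H M) (χ : H →* k) (m : M) :
    charProj ρ χ m = (Nat.card H : k)⁻¹ • ∑ h, χ h⁻¹ • ρ h m := by
  simp only [charProj, LinearMap.smul_apply, LinearMap.sum_apply]

theorem charProj_mem_charEigenspace (ρ : Representation k H M) (χ : H →* k) (m : M) :
    charProj ρ χ m ∈ charEigenspace ρ χ := by
  refine mem_charEigenspace.2 fun g => ?_
  rw [charProj_apply, map_smul, smul_comm (χ g), map_sum, Finset.smul_sum (r := χ g)]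
  refine congrArg _ (Fintype.sum_equiv (Equiv.mulLeft g) _ _ fun h => ?_)
  rw [Equiv.coe_mulLeft, map_smul, map_mul ρ, Module.End.mul_apply, smul_smul, ← map_mul,
    mul_inv_rev, mul_comm h⁻¹, mul_inv_cancel_left]

theorem charProj_mem {S : Submodule k M} (hS : S ∈ ρ.invtSubmodule) (χ : H →* k) {m : M}
    (hm : m ∈ S) : charProj ρ χ m ∈ S := by
  rw [charProj_apply]
  exact S.smul_mem _ <| S.sum_mem fun h _ => S.smul_mem _ <| ρ.mem_invtSubmodule.1 hS h hm

theorem map_charProj {f : M →ₗ[k] N} (hf : ρ.IsIntertwiningMap σ f) (χ : H →* k) (m : M) :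
    f (charProj ρ χ m) = charProj σ χ (f m) := by
  simp only [charProj_apply, map_smul, map_sum, hf.isIntertwining]

variable [NeZero (Nat.card H : k)]

theorem charProj_eq_self {χ : H →* k} {m : M} (hm : m ∈ charEigenspace ρ χ) :
    charProj ρ χ m = m := by
  have hterm : ∀ h, χ h⁻¹ • ρ h m = m := fun h => by
    rw [mem_charEigenspace.1 hm, smul_smul, ← map_mul, inv_mul_cancel, map_one, one_smul]
  rw [charProj_apply, Fintype.sum_congr _ _ hterm, Finset.sum_const, Finset.card_univ,
    ← Nat.card_eq_fintype_card, ← Nat.cast_smul_eq_nsmul k, inv_smul_smul₀ (NeZero.ne _)]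

theorem sum_charProj [HasEnoughRootsOfUnity k (Monoid.exponent H)] [Fintype (H →* kˣ)]
    (ρ : Representation k H M) (m : M) :
    ∑ ψ : H →* kˣ, charProj ρ ((Units.coeHom k).comp ψ) m = m := by
  classical
  simp only [charProj_apply, ← Finset.smul_sum]
  rw [Finset.sum_comm]
  simp only [← Finset.sum_smul, MonoidHom.comp_apply, Units.coeHom_apply,
    sum_monoidHom_units_apply, inv_eq_one, ite_smul, zero_smul]
  rw [Fintype.sum_ite_eq', map_one, Module.End.one_apply, inv_smul_smul₀ (NeZero.ne _)]

end CharProj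

section CharDecomposition

variable {k H M N : Type*} [Field k] [CommGroup H] [Finite H] [NeZero (Nat.card H : k)]
  [AddCommGroup M] [Module k M] [AddCommGroup N] [Module k N] {ρ : Representation k H M}
  {σ : Representation k H N}

theorem map_inf_charEigenspace {f : M →ₗ[k] N} (hf : ρ.IsIntertwiningMap σ f)
    {S : Submodule k M} (hS : S ∈ ρ.invtSubmodule) (χ : H →* k) :
    (S ⊓ charEigenspace ρ χ).map f = S.map f ⊓ charEigenspace σ χ := by
  have := Fintype.ofFinite H
  refine le_antisymm ?_ ?_
  · rintro _ ⟨m, ⟨hmS, hmχ⟩, rfl⟩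
    exact ⟨Submodule.mem_map_of_mem hmS, map_mem_charEigenspace hf hmχ⟩
  · rintro _ ⟨⟨m, hm, rfl⟩, hmχ⟩
    exact ⟨charProj ρ χ m, ⟨charProj_mem hS χ hm, charProj_mem_charEigenspace ρ χ m⟩,
      (map_charProj hf χ m).trans (charProj_eq_self hmχ)⟩

variable [HasEnoughRootsOfUnity k (Monoid.exponent H)]

theorem iSup_inf_charEigenspace {S : Submodule k M} (hS : S ∈ ρ.invtSubmodule) :
    ⨆ χ : H →* k, S ⊓ charEigenspace ρ χ = S := by
  refine le_antisymm (iSup_le fun _ => inf_le_left) fun m hm => ?_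
  have := Fintype.ofFinite H
  have := Fintype.ofFinite (H →* kˣ)
  rw [← sum_charProj ρ m]
  exact Submodule.sum_mem _ fun ψ _ => Submodule.mem_iSup_of_mem _
    ⟨charProj_mem hS _ hm, charProj_mem_charEigenspace ρ _ m⟩

theorem le_iff_forall_inf_charEigenspace_le {S T : Submodule k M} (hS : S ∈ ρ.invtSubmodule) :
    S ≤ T ↔ ∀ χ : H →* k, S ⊓ charEigenspace ρ χ ≤ T := by
  conv_lhs => rw [← iSup_inf_charEigenspace hS, iSup_le_iff]

theorem le_map_iff_forall_inf_charEigenspace_le_map {f : M →ₗ[k] N}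
    (hf : ρ.IsIntertwiningMap σ f) {S : Submodule k N} (hS : S ∈ σ.invtSubmodule)
    {T : Submodule k M} (hT : T ∈ ρ.invtSubmodule) :
    S ≤ T.map f ↔
      ∀ χ : H →* k, S ⊓ charEigenspace σ χ ≤ (T ⊓ charEigenspace ρ χ).map f := by
  simp only [le_iff_forall_inf_charEigenspace_le hS, map_inf_charEigenspace hf hT,
    le_inf_iff, inf_le_right, and_true]

end CharDecomposition

section TwistedRep

variable {k H S W : Type*} [CommRing k] [CommGroup H] [AddCommGroup W] [Module k W]

/-- The representation of `H` on functions `S → W` induced by a representation on `W` and a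
permutation action on `S`. It is normalised as `(h • u) s = σ h⁻¹ (u (θ h s))` so that `u` is in
the eigenspace of `χ` exactly when `u (θ h s) = χ h • σ h (u s)`, without inverting `χ`. -/
def twistedRep (θ : H →* Equiv.Perm S) (σ : Representation k H W) :
    Representation k H (S → W) where
  toFun h := LinearMap.pi fun s => (σ h⁻¹).comp (LinearMap.proj (θ h s))
  map_one' := by
    ext
    simp
  map_mul' g h := by
    refine LinearMap.ext fun u => funext fun s => ?_
    change σ (g * h)⁻¹ (u (θ (g * h) s)) = σ g⁻¹ (σ h⁻¹ (u (θ h (θ g s))))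
    rw [mul_inv, map_mul, mul_comm g h, map_mul, Module.End.mul_apply, Equiv.Perm.mul_apply]

theorem twistedRep_apply (θ : H →* Equiv.Perm S) (σ : Representation k H W) (h : H) (u : S → W)
    (s : S) : twistedRep θ σ h u s = σ h⁻¹ (u (θ h s)) :=
  rfl

theorem mem_charEigenspace_twistedRep {θ : H →* Equiv.Perm S} {σ : Representation k H W}
    {χ : H →* k} {u : S → W} :
    u ∈ charEigenspace (twistedRep θ σ) χ ↔ ∀ h s, u (θ h s) = χ h • σ h (u s) := by
  have hiff : ∀ h s, σ h⁻¹ (u (θ h s)) = χ h • u s ↔ u (θ h s) = χ h • σ h (u s) := fun h s => by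
    rw [← map_smul]
    constructor
    · intro hs
      rw [← hs, σ.self_inv_apply]
    · intro hs
      rw [hs, σ.inv_self_apply]
  simp only [mem_charEigenspace, funext_iff, twistedRep_apply, Pi.smul_apply, hiff]

end TwistedRep

section Complexification

variable {W : Type*} [AddCommGroup W] [Module ℝ W]

/-- The real part of a vector of the complexification `ℂ ⊗[ℝ] W`. -/
noncomputable def tensorRe : ℂ ⊗[ℝ] W →ₗ[ℝ] W :=
  (TensorProduct.lid ℝ W).toLinearMap.comp (LinearMap.rTensor W Complex.reLm)

/-- The imaginary part of a vector of the complexification `ℂ ⊗[ℝ] W`. -/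
noncomputable def tensorIm : ℂ ⊗[ℝ] W →ₗ[ℝ] W :=
  (TensorProduct.lid ℝ W).toLinearMap.comp (LinearMap.rTensor W Complex.imLm)

@[simp]
theorem tensorRe_tmul (c : ℂ) (w : W) : tensorRe (c ⊗ₜ[ℝ] w) = c.re • w := by
  simp [tensorRe]

@[simp]
theorem tensorIm_tmul (c : ℂ) (w : W) : tensorIm (c ⊗ₜ[ℝ] w) = c.im • w := by
  simp [tensorIm]

theorem one_tmul_tensorRe_add_I_tmul_tensorIm (z : ℂ ⊗[ℝ] W) :
    (1 : ℂ) ⊗ₜ[ℝ] tensorRe z + Complex.I ⊗ₜ[ℝ] tensorIm z = z := by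
  induction z with
  | zero => simp
  | tmul c w =>
    rw [tensorRe_tmul, tensorIm_tmul, ← TensorProduct.smul_tmul, ← TensorProduct.smul_tmul,
      ← TensorProduct.add_tmul]
    congr 1
    apply Complex.ext <;> simp
  | add a b ha hb =>
    conv_rhs => rw [← ha, ← hb]
    simp only [map_add, TensorProduct.tmul_add]
    abel

theorem tensorRe_tensorIm_ext_iff {z w : ℂ ⊗[ℝ] W} :
    z = w ↔ tensorRe z = tensorRe w ∧ tensorIm z = tensorIm w := by
  refine ⟨fun h => h ▸ ⟨rfl, rfl⟩, fun ⟨hre, him⟩ => ?_⟩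
  rw [← one_tmul_tensorRe_add_I_tmul_tensorIm z, hre, him, one_tmul_tensorRe_add_I_tmul_tensorIm]

theorem tensorRe_smul (c : ℂ) (z : ℂ ⊗[ℝ] W) :
    tensorRe (c • z) = c.re • tensorRe z - c.im • tensorIm z := by
  induction z with
  | zero => simp
  | tmul d w => simp [TensorProduct.smul_tmul', sub_smul, smul_smul]
  | add a b ha hb =>
    simp only [smul_add, map_add, ha, hb]
    abel

theorem tensorIm_smul (c : ℂ) (z : ℂ ⊗[ℝ] W) :
    tensorIm (c • z) = c.re • tensorIm z + c.im • tensorRe z := by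
  induction z with
  | zero => simp
  | tmul d w => simp [TensorProduct.smul_tmul', add_smul, smul_smul]
  | add a b ha hb =>
    simp only [smul_add, map_add, ha, hb]
    abel

theorem tensorRe_baseChange {U : Type*} [AddCommGroup U] [Module ℝ U] (f : W →ₗ[ℝ] U)
    (z : ℂ ⊗[ℝ] W) : tensorRe (f.baseChange ℂ z) = f (tensorRe z) := by
  induction z with
  | zero => simp
  | tmul c w => simp
  | add a b ha hb => simp only [map_add, ha, hb]

theorem tensorIm_baseChange {U : Type*} [AddCommGroup U] [Module ℝ U] (f : W →ₗ[ℝ] U)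
    (z : ℂ ⊗[ℝ] W) : tensorIm (f.baseChange ℂ z) = f (tensorIm z) := by
  induction z with
  | zero => simp
  | tmul c w => simp
  | add a b ha hb => simp only [map_add, ha, hb]

/-- The complexification of a real representation. -/
noncomputable def complexRep {H : Type*} [Monoid H] (ρ : Representation ℝ H W) :
    Representation ℂ H (ℂ ⊗[ℝ] W) :=
  (Module.End.baseChangeHom ℝ ℂ W).toMonoidHom.comp ρ

end Complexification

/-- The real vector space `𝒯(X)` of infinitesimal rigid motions. -/
def infRigidMotions (X : Type) [NormedAddCommGroup X] [NormedSpace ℝ X] [FiniteDimensional ℝ X] :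
    Submodule ℝ (X → X) where
  carrier := {η | IsInfRigidMotion η}
  zero_mem' := .zero
  add_mem' := .add
  smul_mem' c _ hη := hη.smul c

theorem one_tmul_mem_TXC {η : X → X} (hη : IsInfRigidMotion η) :
    (fun x => (1 : ℂ) ⊗ₜ[ℝ] η x) ∈ TXC X :=
  Submodule.subset_span ⟨η, hη, rfl⟩

theorem I_tmul_mem_TXC {η : X → X} (hη : IsInfRigidMotion η) :
    (fun x => Complex.I ⊗ₜ[ℝ] η x) ∈ TXC X := by
  convert (TXC X).smul_mem Complex.I (one_tmul_mem_TXC hη) using 2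
  simp [TensorProduct.smul_tmul']

theorem mem_TXC_iff [FiniteDimensional ℝ X] {η : X → ℂ ⊗[ℝ] X} :
    η ∈ TXC X ↔ IsInfRigidMotion (fun x => tensorRe (η x)) ∧
      IsInfRigidMotion fun x => tensorIm (η x) := by
  refine ⟨fun hη => ?_, fun ⟨hre, him⟩ => ?_⟩
  · induction hη using Submodule.span_induction with
    | mem η h =>
      obtain ⟨ζ, hζ, rfl⟩ := h
      simpa using ⟨hζ, IsInfRigidMotion.zero⟩
    | zero => simpa using IsInfRigidMotion.zero
    | add η ζ _ _ hη hζ =>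
      simp only [Pi.add_apply, map_add]
      exact ⟨hη.1.add hζ.1, hη.2.add hζ.2⟩
    | smul c η _ hη =>
      let T := infRigidMotions X
      simp only [Pi.smul_apply, tensorRe_smul, tensorIm_smul]
      exact ⟨T.sub_mem (T.smul_mem c.re hη.1) (T.smul_mem c.im hη.2),
        T.add_mem (T.smul_mem c.re hη.2) (T.smul_mem c.im hη.1)⟩
  · rw [← funext fun x => one_tmul_tensorRe_add_I_tmul_tensorIm (η x)]
    exact (TXC X).add_mem (one_tmul_mem_TXC hre) (I_tmul_mem_TXC him)

section SymmetryReps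

omit [Fintype V] [DecidableEq V] [Fintype Γ]

variable {S : Type*}

/-- The representation on `X` given by a group of linear isometries. -/
def isometryRep (τ : Γ →* (X ≃ₗᵢ[ℝ] X)) : Representation ℝ Γ X where
  toFun γ := (τ γ).toLinearEquiv.toLinearMap
  map_one' := by
    ext
    simp
  map_mul' γ δ := by
    ext
    simp

/-- The permutation action on the points of `X` given by a group of linear isometries. -/
def pointPerm (τ : Γ →* (X ≃ₗᵢ[ℝ] X)) : Γ →* Equiv.Perm X where
  toFun γ := (τ γ).toEquiv
  map_one' := by
    ext
    simp
  map_mul' γ δ := by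
    ext
    simp

/-- The permutation action on the edges of a symmetric graph. -/
def edgePerm (G : SimpleGraph V) (θ : Γ →* Equiv.Perm V)
    (hadj : ∀ (γ : Γ) (u v : V), G.Adj u v ↔ G.Adj (θ γ u) (θ γ v)) :
    Γ →* Equiv.Perm G.edgeSet :=
  MonoidHom.toHomPerm
    { toFun := edgeAct G θ hadj
      map_one' := funext fun e => Subtype.ext <| by
        change Sym2.map (θ 1) e = e
        simp
      map_mul' := fun γ δ => funext fun e => Subtype.ext <| by
        change Sym2.map (θ (γ * δ)) e = Sym2.map (θ γ) (Sym2.map (θ δ) e)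
        rw [Sym2.map_map, map_mul, Equiv.Perm.coe_mul] }

/-- The action of the symmetry group on complex displacement fields indexed by `S`; for `S = V`
it acts on `(X_ℂ)^V`, and for `S = X` on complex vector fields. -/
noncomputable abbrev fieldRep (θ : Γ →* Equiv.Perm S) (τ : Γ →* (X ≃ₗᵢ[ℝ] X)) :
    Representation ℂ Γ (S → ℂ ⊗[ℝ] X) :=
  twistedRep θ (complexRep (isometryRep τ))

/-- The action of the symmetry group on functions on the edge set with values in `k`. -/
abbrev edgeRep (k : Type*) [CommRing k] (G : SimpleGraph V) (θ : Γ →* Equiv.Perm V)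
    (hadj : ∀ (γ : Γ) (u v : V), G.Adj u v ↔ G.Adj (θ γ u) (θ γ v)) :
    Representation k Γ (G.edgeSet → k) :=
  twistedRep (edgePerm G θ hadj) (Representation.trivial k Γ k)

variable (G : SimpleGraph V) (θ : Γ →* Equiv.Perm V)
  (hadj : ∀ (γ : Γ) (u v : V), G.Adj u v ↔ G.Adj (θ γ u) (θ γ v)) (τ : Γ →* (X ≃ₗᵢ[ℝ] X))

theorem Xchi_eq_charEigenspace (χ : Γ →* ℂ) :
    Xchi θ τ χ = charEigenspace (fieldRep θ τ) χ := by
  ext u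
  simp only [Xchi, Submodule.mem_iInf, LinearMap.mem_ker, LinearMap.sub_apply, sub_eq_zero,
    mem_charEigenspace_twistedRep]
  rfl

theorem Ychi_eq_charEigenspace (χ : Γ →* ℂ) :
    Ychi G θ hadj χ = charEigenspace (edgeRep ℂ G θ hadj) χ := by
  ext y
  simp only [Ychi, Submodule.mem_iInf, LinearMap.mem_ker, LinearMap.sub_apply, sub_eq_zero,
    mem_charEigenspace_twistedRep]
  rfl

theorem Tchi_eq_inf_charEigenspace (χ : Γ →* ℂ) :
    Tchi τ χ = TXC X ⊓ charEigenspace (fieldRep (pointPerm τ) τ) χ := by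
  ext η
  simp only [Tchi, Submodule.mem_inf, Submodule.mem_iInf, LinearMap.mem_ker, LinearMap.sub_apply,
    sub_eq_zero, mem_charEigenspace_twistedRep]
  rfl

theorem TXC_mem_invtSubmodule [FiniteDimensional ℝ X] :
    TXC X ∈ (fieldRep (pointPerm τ) τ).invtSubmodule := by
  refine (Representation.mem_invtSubmodule _).2 fun γ η hη => ?_
  obtain ⟨hre, him⟩ := mem_TXC_iff.1 hη
  have hinv : ∀ x, isometryRep τ γ⁻¹ x = (τ γ).symm x := fun x => by
    change τ γ⁻¹ x = _
    rw [map_inv]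
    rfl
  refine mem_TXC_iff.2 ⟨?_, ?_⟩
  · convert hre.conj (τ γ) using 2
    exact (tensorRe_baseChange _ _).trans (hinv _)
  · convert him.conj (τ γ) using 2
    exact (tensorIm_baseChange _ _).trans (hinv _)

variable {θ τ} in
theorem isIntertwiningMap_rhoC {p : V → X} (hsymm : ∀ (γ : Γ) (v : V), τ γ (p v) = p (θ γ v)) :
    (fieldRep (pointPerm τ) τ).IsIntertwiningMap (fieldRep θ τ) (rhoC p) := by
  refine ⟨fun γ η => funext fun v => ?_⟩
  change complexRep _ γ⁻¹ (η (τ γ (p v))) = complexRep _ γ⁻¹ (η (p (θ γ v)))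
  rw [hsymm]

end SymmetryReps

theorem fderiv_apply_of_comp_eq {𝕜 E F : Type*} [NontriviallyNormedField 𝕜]
    [NormedAddCommGroup E] [NormedSpace 𝕜 E] [NormedAddCommGroup F] [NormedSpace 𝕜 F]
    {f : E → F} {p : E} (hf : DifferentiableAt 𝕜 f p) {L : E →L[𝕜] E} (hL : L p = p)
    {P : F →L[𝕜] F} (hcomm : f ∘ L = P ∘ f) (u : E) :
    fderiv 𝕜 f p (L u) = P (fderiv 𝕜 f p u) := by
  have hleft : HasFDerivAt (f ∘ L) ((fderiv 𝕜 f p).comp L) p :=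
    HasFDerivAt.comp p (by simpa only [hL] using hf.hasFDerivAt) L.hasFDerivAt
  have hright : HasFDerivAt (P ∘ f) (P.comp (fderiv 𝕜 f p)) p :=
    P.hasFDerivAt.comp p hf.hasFDerivAt
  exact DFunLike.congr_fun (hleft.unique (hcomm ▸ hright)) u

section FrameworkDifferential

omit [Fintype Γ]

variable {G : SimpleGraph V} [Fintype G.edgeSet] {p : V → X} {θ : Γ →* Equiv.Perm V}
  {τ : Γ →* (X ≃ₗᵢ[ℝ] X)}

theorem cplxFunctional_apply (f : X →ₗ[ℝ] ℝ) (z : ℂ ⊗[ℝ] X) :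
    cplxFunctional f z = ⟨f (tensorRe z), f (tensorIm z)⟩ := by
  induction z with
  | zero => exact Complex.ext (by simp) (by simp)
  | tmul c x => exact Complex.ext (by simp [cplxFunctional]) (by simp [cplxFunctional])
  | add a b ha hb =>
    rw [map_add, ha, hb]
    exact Complex.ext (by simp) (by simp)

theorem dfR_apply (u : V → X) (e : G.edgeSet) : dfR G p u e = ∑ v, phiEdge G p e v (u v) := by
  conv_lhs => rw [← Finset.univ_sum_single u, map_sum, Finset.sum_apply]
  rfl

theorem dfC_apply (u : V → ℂ ⊗[ℝ] X) (e : G.edgeSet) :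
    dfC G p u e =
      ⟨dfR G p (fun v => tensorRe (u v)) e, dfR G p (fun v => tensorIm (u v)) e⟩ := by
  have hsum : dfC G p u e = ∑ v, cplxFunctional (phiEdge G p e v) (u v) := by
    simp [dfC]
  simp only [hsum, dfR_apply, cplxFunctional_apply]
  exact Complex.ext (Complex.re_sum _ _) (Complex.im_sum _ _)

omit [Fintype V] [DecidableEq V] in
theorem fG_twistedRep
    (hadj : ∀ (γ : Γ) (u v : V), G.Adj u v ↔ G.Adj (θ γ u) (θ γ v)) (γ : Γ) (x : V → X) :
    fG G (twistedRep θ (isometryRep τ) γ x) = edgeRep ℝ G θ hadj γ (fG G x) := by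
  ext ⟨e, he⟩
  induction e with
  | _ v w =>
    change ‖τ γ⁻¹ (x (θ γ v)) - τ γ⁻¹ (x (θ γ w))‖ = ‖x (θ γ v) - x (θ γ w)‖
    rw [← map_sub, LinearIsometryEquiv.norm_map]

omit [Fintype V] [DecidableEq V] in
theorem isIntertwiningMap_dfR [Finite V] (hwp : WellPositioned G p)
    (hadj : ∀ (γ : Γ) (u v : V), G.Adj u v ↔ G.Adj (θ γ u) (θ γ v))
    (hsymm : ∀ (γ : Γ) (v : V), τ γ (p v) = p (θ γ v)) :
    (twistedRep θ (isometryRep τ)).IsIntertwiningMap (edgeRep ℝ G θ hadj)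
      (dfR G p).toLinearMap := by
  have := Fintype.ofFinite V
  refine ⟨fun γ u => ?_⟩
  let L : (V → X) →L[ℝ] (V → X) := ⟨twistedRep θ (isometryRep τ) γ,
    continuous_pi fun v => (τ γ⁻¹).continuous.comp (continuous_apply (θ γ v))⟩
  let P : (G.edgeSet → ℝ) →L[ℝ] (G.edgeSet → ℝ) := ⟨edgeRep ℝ G θ hadj γ,
    continuous_pi fun e => continuous_apply (edgePerm G θ hadj γ e)⟩
  have hL : L p = p := funext fun v => by
    change τ γ⁻¹ (p (θ γ v)) = p v
    rw [hsymm, ← Equiv.Perm.mul_apply, ← map_mul, inv_mul_cancel, map_one, Equiv.Perm.one_apply]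
  exact fderiv_apply_of_comp_eq (L := L) (P := P) hwp hL (funext (fG_twistedRep hadj γ)) u

theorem isIntertwiningMap_dfC (hwp : WellPositioned G p)
    (hadj : ∀ (γ : Γ) (u v : V), G.Adj u v ↔ G.Adj (θ γ u) (θ γ v))
    (hsymm : ∀ (γ : Γ) (v : V), τ γ (p v) = p (θ γ v)) :
    (fieldRep θ τ).IsIntertwiningMap (edgeRep ℂ G θ hadj) (dfC G p) := by
  refine ⟨fun γ u => funext fun e => ?_⟩
  have hR := (isIntertwiningMap_dfR hwp hadj hsymm).isIntertwining γ
  have hre : (fun v => tensorRe (fieldRep θ τ γ u v)) =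
      twistedRep θ (isometryRep τ) γ fun v => tensorRe (u v) :=
    funext fun v => tensorRe_baseChange _ _
  have him : (fun v => tensorIm (fieldRep θ τ γ u v)) =
      twistedRep θ (isometryRep τ) γ fun v => tensorIm (u v) :=
    funext fun v => tensorIm_baseChange _ _
  change _ = dfC G p u (edgePerm G θ hadj γ e)
  rw [dfC_apply, dfC_apply, hre, him]
  exact Complex.ext (congrFun (hR _) e) (congrFun (hR _) e)

end FrameworkDifferential

section Exactness

omit [Fintype Γ]

variable {G : SimpleGraph V} [Fintype G.edgeSet] {p : V → X} {θ : Γ →* Equiv.Perm V}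
  {τ : Γ →* (X ≃ₗᵢ[ℝ] X)}

omit [Fintype V] [DecidableEq V] in
theorem full_iff_TXC_inf_ker_le_bot [FiniteDimensional ℝ X] :
    Full G p ↔ TXC X ⊓ LinearMap.ker (rhoC p) ≤ ⊥ := by
  constructor
  · rintro hfull η ⟨hη, hker⟩
    have hzero : ∀ v, η (p v) = 0 := congrFun hker
    obtain ⟨hre, him⟩ := mem_TXC_iff.1 hη
    have hre0 := hfull _ hre fun v => by rw [hzero, map_zero]
    have him0 := hfull _ him fun v => by rw [hzero, map_zero]
    exact funext fun x => tensorRe_tensorIm_ext_iff.2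
      ⟨(congrFun hre0 x).trans (map_zero _).symm, (congrFun him0 x).trans (map_zero _).symm⟩
  · intro hle η hη hzero
    have hker : (fun x => (1 : ℂ) ⊗ₜ[ℝ] η x) ∈ LinearMap.ker (rhoC p) :=
      funext fun v => by
        change (1 : ℂ) ⊗ₜ[ℝ] η (p v) = 0
        rw [hzero, TensorProduct.tmul_zero]
    have h0 := hle ⟨one_tmul_mem_TXC hη, hker⟩
    ext x
    simpa using congrArg tensorRe (congrFun h0 x)

theorem infRigid_iff_ker_le_map_TXC [FiniteDimensional ℝ X] :
    InfRigid G p ↔ LinearMap.ker (dfC G p) ≤ (TXC X).map (rhoC p) := by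
  constructor
  · intro hrigid u hu
    have hdf : ∀ e, _ := fun e => Complex.ext_iff.1 ((dfC_apply u e).symm.trans (congrFun hu e))
    obtain ⟨η, hη, hηu⟩ := hrigid (fun v => tensorRe (u v)) (funext fun e => (hdf e).1)
    obtain ⟨ζ, hζ, hζu⟩ := hrigid (fun v => tensorIm (u v)) (funext fun e => (hdf e).2)
    refine ⟨_, (TXC X).add_mem (one_tmul_mem_TXC hη) (I_tmul_mem_TXC hζ), funext fun v => ?_⟩
    change (1 : ℂ) ⊗ₜ[ℝ] η (p v) + Complex.I ⊗ₜ[ℝ] ζ (p v) = u v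
    rw [hηu, hζu, one_tmul_tensorRe_add_I_tmul_tensorIm]
  · intro hle u hu
    have hker : (fun v => (1 : ℂ) ⊗ₜ[ℝ] u v) ∈ LinearMap.ker (dfC G p) := by
      have him : dfR G p (fun _ => 0) = 0 := map_zero _
      ext e
      simp [dfC_apply, hu, him, Complex.ext_iff]
    obtain ⟨η, hη, hηu⟩ := hle hker
    refine ⟨_, (mem_TXC_iff.1 hη).1, fun v => ?_⟩
    change tensorRe (rhoC p η v) = u v
    rw [hηu, tensorRe_tmul, Complex.one_re, one_smul]

theorem independent_iff_top_le_map :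
    Independent G p ↔ ⊤ ≤ (⊤ : Submodule ℂ (V → ℂ ⊗[ℝ] X)).map (dfC G p) := by
  constructor
  · intro hind y _
    obtain ⟨a, ha⟩ := hind fun e => (y e).re
    obtain ⟨b, hb⟩ := hind fun e => (y e).im
    refine ⟨fun v => (1 : ℂ) ⊗ₜ[ℝ] a v + Complex.I ⊗ₜ[ℝ] b v, trivial, funext fun e => ?_⟩
    rw [dfC_apply]
    simp [ha, hb]
  · intro hle y
    obtain ⟨u, -, hu⟩ := hle (x := fun e => (y e : ℂ)) trivial
    refine ⟨fun v => tensorRe (u v), funext fun e => ?_⟩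
    exact (Complex.ext_iff.1 ((dfC_apply u e).symm.trans (congrFun hu e))).1

omit [Fintype V] [DecidableEq V] in
theorem full_iff_forall_chiFull [Finite Γ] [FiniteDimensional ℝ X]
    (hsymm : ∀ (γ : Γ) (v : V), τ γ (p v) = p (θ γ v)) :
    Full G p ↔ ∀ χ : Γ →* ℂ, ChiFull G p τ χ := by
  have hchi : ∀ χ, TXC X ⊓ LinearMap.ker (rhoC p) ⊓ charEigenspace (fieldRep (pointPerm τ) τ) χ =
      Tchi τ χ ⊓ LinearMap.ker (rhoC p) := fun χ => by
    rw [Tchi_eq_inf_charEigenspace, inf_right_comm]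
  rw [full_iff_TXC_inf_ker_le_bot, le_iff_forall_inf_charEigenspace_le <|
    Sublattice.inf_mem (TXC_mem_invtSubmodule τ) <|
      ker_mem_invtSubmodule (isIntertwiningMap_rhoC hsymm)]
  simp only [hchi]
  exact forall_congr' fun χ => ⟨fun hle η hη hker => hle ⟨hη, hker⟩, fun h η hη => h η hη.1 hη.2⟩

theorem infRigid_iff_forall_chiRigid [Finite Γ] [FiniteDimensional ℝ X]
    (hwp : WellPositioned G p)
    (hadj : ∀ (γ : Γ) (u v : V), G.Adj u v ↔ G.Adj (θ γ u) (θ γ v))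
    (hsymm : ∀ (γ : Γ) (v : V), τ γ (p v) = p (θ γ v)) :
    InfRigid G p ↔ ∀ χ : Γ →* ℂ, ChiRigid G p θ τ χ := by
  rw [infRigid_iff_ker_le_map_TXC, le_map_iff_forall_inf_charEigenspace_le_map
    (isIntertwiningMap_rhoC hsymm)
    (ker_mem_invtSubmodule (isIntertwiningMap_dfC hwp hadj hsymm)) (TXC_mem_invtSubmodule τ)]
  simp only [← Tchi_eq_inf_charEigenspace]
  simp only [← Xchi_eq_charEigenspace]
  exact forall_congr' fun χ => ⟨fun hle u hu hker => hle ⟨hker, hu⟩, fun h u hu => h u hu.2 hu.1⟩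

theorem independent_iff_forall_chiIndependent [Finite Γ] (hwp : WellPositioned G p)
    (hadj : ∀ (γ : Γ) (u v : V), G.Adj u v ↔ G.Adj (θ γ u) (θ γ v))
    (hsymm : ∀ (γ : Γ) (v : V), τ γ (p v) = p (θ γ v)) :
    Independent G p ↔ ∀ χ : Γ →* ℂ, ChiIndependent G p θ hadj τ χ := by
  rw [independent_iff_top_le_map, le_map_iff_forall_inf_charEigenspace_le_map
    (isIntertwiningMap_dfC hwp hadj hsymm) (Representation.invtSubmodule.top_mem _)
    (Representation.invtSubmodule.top_mem _)]
  simp only [top_inf_eq, ← Xchi_eq_charEigenspace, ← Ychi_eq_charEigenspace]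
  rfl

end Exactness

omit [Fintype Γ] in
theorem symmetric_vs_character_rigidity_general [Finite Γ] [FiniteDimensional ℝ X]
    (G : SimpleGraph V) [Fintype G.edgeSet] (p : V → X) (hwp : WellPositioned G p)
    (θ : Γ →* Equiv.Perm V)
    (hadj : ∀ (γ : Γ) (u v : V), G.Adj u v ↔ G.Adj (θ γ u) (θ γ v))
    (τ : Γ →* (X ≃ₗᵢ[ℝ] X))
    (hsymm : ∀ (γ : Γ) (v : V), τ γ (p v) = p (θ γ v)) :
    (Full G p ↔ ∀ χ : Γ →* ℂ, ChiFull G p τ χ) ∧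
      (InfRigid G p ↔ ∀ χ : Γ →* ℂ, ChiRigid G p θ τ χ) ∧
      (Independent G p ↔ ∀ χ : Γ →* ℂ, ChiIndependent G p θ hadj τ χ) ∧
      (Isostatic G p ↔ ∀ χ : Γ →* ℂ, ChiIsostatic G p θ hadj τ χ) := by
  have hrigid := infRigid_iff_forall_chiRigid hwp hadj hsymm
  have hindep := independent_iff_forall_chiIndependent hwp hadj hsymm
  exact ⟨full_iff_forall_chiFull hsymm, hrigid, hindep,
    (and_congr hrigid hindep).trans forall_and.symm⟩

theorem symmetric_vs_character_rigidity
    (hd : 2 ≤ Module.finrank ℝ X) [FiniteDimensional ℝ X]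
    (G : SimpleGraph V) [Fintype G.edgeSet] (p : V → X)
    (hpinj : Function.Injective p)
    (hwp : WellPositioned G p)
    (θ : Γ →* Equiv.Perm V)
    (hadj : ∀ (γ : Γ) (u v : V), G.Adj u v ↔ G.Adj (θ γ u) (θ γ v))
    (hfree : ∀ γ : Γ, γ ≠ 1 → ∀ v : V, θ γ v ≠ v)
    (τ : Γ →* (X ≃ₗᵢ[ℝ] X))
    (hsymm : ∀ (γ : Γ) (v : V), τ γ (p v) = p (θ γ v)) :
    (Full G p ↔ ∀ χ : Γ →* ℂ, ChiFull G p τ χ) ∧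
      (InfRigid G p ↔ ∀ χ : Γ →* ℂ, ChiRigid G p θ τ χ) ∧
      (Independent G p ↔ ∀ χ : Γ →* ℂ, ChiIndependent G p θ hadj τ χ) ∧
      (Isostatic G p ↔ ∀ χ : Γ →* ℂ, ChiIsostatic G p θ hadj τ χ) := by
  exact symmetric_vs_character_rigidity_general G p hwp θ hadj τ hsymm

end Stmt4
end

section
/- Let 𝒢 = (G,p,θ,τ) be a well-positioned Γ-symmetric bar-joint framework in X, where θ acts freely on both the vertices and the edges of G, and let V_0 and E_0 be the sets of vertex orbits and edge orbits. Let χ ∈ Γ̂ and suppose 𝒢 is χ-symmetrically full. Then: (i) if 𝒢 is χ-symmetrically infinitesimally rigid, then |E_0| ≥ d·|V_0| − dim_ℂ 𝒯_χ(X); (ii) if 𝒢 is χ-symmetrically independent, then |E_0| ≤ d·|V_0| − dim_ℂ 𝒯_χ(X); (iii) if 𝒢 is χ-symmetrically isostatic, then |E_0| = d·|V_0| − dim_ℂ 𝒯_χ(X). -/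
/-!
Statement 6 (Proposition 2.12 / prop:counts): counting conditions on the numbers of
vertex and edge orbits for `χ`-symmetrically rigid/independent/isostatic frameworks.
-/

open scoped TensorProduct

namespace Stmt6

variable {V : Type} [Fintype V] [DecidableEq V]
variable {X : Type} [NormedAddCommGroup X] [NormedSpace ℝ X]
variable {Γ : Type} [CommGroup Γ] [Fintype Γ]

noncomputable def fG (G : SimpleGraph V) [Fintype G.edgeSet] (x : V → X) (e : G.edgeSet) : ℝ :=
  Sym2.lift ⟨fun v w => ‖x v - x w‖, fun v w => by simp only []; rw [norm_sub_rev]⟩ e.1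

noncomputable def WellPositioned (G : SimpleGraph V) [Fintype G.edgeSet] (p : V → X) : Prop :=
  DifferentiableAt ℝ (fG G) p

noncomputable def dfR (G : SimpleGraph V) [Fintype G.edgeSet] (p : V → X) :
    (V → X) →L[ℝ] (G.edgeSet → ℝ) :=
  fderiv ℝ (fG G) p

noncomputable def phiEdge (G : SimpleGraph V) [Fintype G.edgeSet] (p : V → X)
    (e : G.edgeSet) (v : V) : X →ₗ[ℝ] ℝ :=
  (LinearMap.proj (R := ℝ) (φ := fun _ : G.edgeSet => ℝ) e).comp
    ((dfR G p).toLinearMap.comp (LinearMap.single ℝ (fun _ : V => X) v))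

noncomputable def cplxFunctional (f : X →ₗ[ℝ] ℝ) : (ℂ ⊗[ℝ] X) →ₗ[ℂ] ℂ :=
  LinearMap.liftBaseChange ℂ ((Complex.ofRealCLM.toLinearMap).comp f)

noncomputable def dfC (G : SimpleGraph V) [Fintype G.edgeSet] (p : V → X) :
    (V → ℂ ⊗[ℝ] X) →ₗ[ℂ] (G.edgeSet → ℂ) :=
  LinearMap.pi fun e : G.edgeSet =>
    ∑ v : V, (cplxFunctional (phiEdge G p e v)).comp
      (LinearMap.proj (R := ℂ) (φ := fun _ : V => ℂ ⊗[ℝ] X) v)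

def edgeAct (G : SimpleGraph V) (θ : Γ →* Equiv.Perm V)
    (hadj : ∀ (γ : Γ) (u v : V), G.Adj u v ↔ G.Adj (θ γ u) (θ γ v))
    (γ : Γ) (e : G.edgeSet) : G.edgeSet :=
  ⟨Sym2.map (θ γ) e.1, by
    obtain ⟨e, he⟩ := e
    induction e using Sym2.ind with
    | _ u v => simpa using (hadj γ u v).1 (by simpa using he)⟩

noncomputable def tauC (τ : Γ →* (X ≃ₗᵢ[ℝ] X)) (γ : Γ) :
    (ℂ ⊗[ℝ] X) →ₗ[ℂ] (ℂ ⊗[ℝ] X) :=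
  LinearMap.baseChange ℂ ((τ γ).toLinearEquiv.toLinearMap)

noncomputable def Xchi (θ : Γ →* Equiv.Perm V) (τ : Γ →* (X ≃ₗᵢ[ℝ] X)) (χ : Γ →* ℂ) :
    Submodule ℂ (V → ℂ ⊗[ℝ] X) :=
  ⨅ (γ : Γ), ⨅ (v : V),
    LinearMap.ker
      ((LinearMap.proj (R := ℂ) (φ := fun _ : V => ℂ ⊗[ℝ] X) (θ γ v)) -
        χ γ • ((tauC τ γ).comp (LinearMap.proj (R := ℂ) (φ := fun _ : V => ℂ ⊗[ℝ] X) v)))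

noncomputable def Ychi (G : SimpleGraph V) (θ : Γ →* Equiv.Perm V)
    (hadj : ∀ (γ : Γ) (u v : V), G.Adj u v ↔ G.Adj (θ γ u) (θ γ v)) (χ : Γ →* ℂ) :
    Submodule ℂ (G.edgeSet → ℂ) :=
  ⨅ (γ : Γ), ⨅ (e : G.edgeSet),
    LinearMap.ker
      ((LinearMap.proj (R := ℂ) (φ := fun _ : G.edgeSet => ℂ) (edgeAct G θ hadj γ e)) -
        χ γ • (LinearMap.proj (R := ℂ) (φ := fun _ : G.edgeSet => ℂ) e))

def IsRigidMotion (α : X → ℝ → X) : Prop :=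
  (∀ x : X, ContinuousOn (α x) (Set.Icc (-1 : ℝ) 1)) ∧
    (∀ x : X, α x 0 = x) ∧
    (∀ x y : X, ∀ t ∈ Set.Icc (-1 : ℝ) 1, ‖α x t - α y t‖ = ‖x - y‖)

def IsInfRigidMotion (η : X → X) : Prop :=
  ∃ α : X → ℝ → X, IsRigidMotion α ∧ ∀ x : X, HasDerivAt (α x) (η x) 0

noncomputable def TXC (X : Type) [NormedAddCommGroup X] [NormedSpace ℝ X] :
    Submodule ℂ (X → ℂ ⊗[ℝ] X) :=
  Submodule.span ℂ
    {η' | ∃ η : X → X, IsInfRigidMotion η ∧ η' = fun x => (1 : ℂ) ⊗ₜ[ℝ] η x}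

noncomputable def Tchi (τ : Γ →* (X ≃ₗᵢ[ℝ] X)) (χ : Γ →* ℂ) :
    Submodule ℂ (X → ℂ ⊗[ℝ] X) :=
  TXC X ⊓
    ⨅ (γ : Γ), ⨅ (x : X),
      LinearMap.ker
        ((LinearMap.proj (R := ℂ) (φ := fun _ : X => ℂ ⊗[ℝ] X) (τ γ x)) -
          χ γ • ((tauC τ γ).comp (LinearMap.proj (R := ℂ) (φ := fun _ : X => ℂ ⊗[ℝ] X) x)))

noncomputable def rhoC (p : V → X) : (X → ℂ ⊗[ℝ] X) →ₗ[ℂ] (V → ℂ ⊗[ℝ] X) :=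
  LinearMap.pi fun v : V => LinearMap.proj (R := ℂ) (φ := fun _ : X => ℂ ⊗[ℝ] X) (p v)

noncomputable def ChiFull (G : SimpleGraph V) [Fintype G.edgeSet] (p : V → X)
    (τ : Γ →* (X ≃ₗᵢ[ℝ] X)) (χ : Γ →* ℂ) : Prop :=
  ∀ η ∈ Tchi τ χ, rhoC (V := V) p η = 0 → η = 0

noncomputable def ChiRigid (G : SimpleGraph V) [Fintype G.edgeSet] (p : V → X)
    (θ : Γ →* Equiv.Perm V) (τ : Γ →* (X ≃ₗᵢ[ℝ] X)) (χ : Γ →* ℂ) : Prop :=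
  ∀ u ∈ Xchi θ τ χ, dfC G p u = 0 → ∃ η ∈ Tchi τ χ, rhoC (V := V) p η = u

noncomputable def ChiIndependent (G : SimpleGraph V) [Fintype G.edgeSet] (p : V → X)
    (θ : Γ →* Equiv.Perm V)
    (hadj : ∀ (γ : Γ) (u v : V), G.Adj u v ↔ G.Adj (θ γ u) (θ γ v))
    (τ : Γ →* (X ≃ₗᵢ[ℝ] X)) (χ : Γ →* ℂ) : Prop :=
  ∀ y ∈ Ychi G θ hadj χ, ∃ u ∈ Xchi θ τ χ, dfC G p u = y

/-- The number of vertex orbits `|V₀|`. -/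
noncomputable def V0card (θ : Γ →* Equiv.Perm V) : ℕ :=
  Nat.card (Quot (fun u v : V => ∃ γ : Γ, θ γ u = v))

/-- The number of edge orbits `|E₀|`. -/
noncomputable def E0card (G : SimpleGraph V) (θ : Γ →* Equiv.Perm V)
    (hadj : ∀ (γ : Γ) (u v : V), G.Adj u v ↔ G.Adj (θ γ u) (θ γ v)) : ℕ :=
  Nat.card (Quot (fun e f : G.edgeSet => ∃ γ : Γ, edgeAct G θ hadj γ e = f))

/-!
Twisting by `χ`, both `X_χ` and `Y_χ` are spaces of equivariant maps from a free `Γ`-set into a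
representation of `Γ`. Such a map is determined by its values on a set of orbit representatives,
and these values are arbitrary, so `dim X_χ = d · |V₀|` and `dim Y_χ = |E₀|`. The counts are then
the dimension inequalities for the complex `0 → 𝒯_χ → X_χ → Y_χ → 0`. That this is a complex is
checked on real vectors, where the isometries in the image of `τ` and the rigid motions preserve
edge lengths, and extends to `X_ℂ` because `1 ⊗ X` spans it.
-/

section LinearAlgebra

variable {K T U W : Type*} [DivisionRing K] [AddCommGroup T] [Module K T]
  [AddCommGroup U] [Module K U] [FiniteDimensional K U] [AddCommGroup W] [Module K W]
  {f : T →ₗ[K] U} {g : U →ₗ[K] W}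

theorem finrank_le_add_of_exact [FiniteDimensional K W] (hf : Function.Injective f)
    (hfg : Function.Exact f g) :
    Module.finrank K U ≤ Module.finrank K T + Module.finrank K W := by
  rw [← g.finrank_range_add_finrank_ker, hfg.linearMap_ker_eq, LinearMap.finrank_range_of_inj hf,
    add_comm]
  exact Nat.add_le_add_left (Submodule.finrank_le _) _

theorem add_finrank_le_of_comp_eq_zero (hf : Function.Injective f) (hg : Function.Surjective g)
    (hgf : g ∘ₗ f = 0) :
    Module.finrank K T + Module.finrank K W ≤ Module.finrank K U := by
  rw [← g.finrank_range_add_finrank_ker, LinearMap.range_eq_top.2 hg, finrank_top, add_comm,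
    ← LinearMap.finrank_range_of_inj hf]
  exact Nat.add_le_add_left (Submodule.finrank_mono (LinearMap.range_le_ker_iff.2 hgf)) _

theorem linearMap_ext_one_tmul {ι R A M N : Type*} [Finite ι] [CommSemiring R] [Semiring A]
    [Algebra R A] [AddCommMonoid M] [Module R M] [AddCommMonoid N] [Module A N] [Module R N]
    [IsScalarTower R A N] {f g : (ι → A ⊗[R] M) →ₗ[A] N}
    (h : ∀ u : ι → M, f (fun i => 1 ⊗ₜ u i) = g (fun i => 1 ⊗ₜ u i)) : f = g := by
  classical
  ext i x
  have single_tmul : (fun j => (1 : A) ⊗ₜ[R] (Pi.single i x : ι → M) j) = Pi.single i (1 ⊗ₜ x) := by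
    ext j
    obtain rfl | hj := eq_or_ne j i <;> simp [*]
  simpa [single_tmul] using h (Pi.single i x)

end LinearAlgebra

section EquivariantMaps

variable {k M W S : Type*} [CommSemiring k] [AddCommMonoid W] [Module k W]

/-- The space of maps `u : S → W` on an `M`-set `S` that are equivariant for the
representation `σ` of `M` on `W`. -/
def equivariantMaps [Monoid M] (σ : Representation k M W) (S : Type*) [MulAction M S] :
    Submodule k (S → W) where
  carrier := {u | ∀ m s, u (m • s) = σ m (u s)}
  zero_mem' := by simp
  add_mem' hu hv m s := by simp [hu m s, hv m s]
  smul_mem' c u hu m s := by simp [hu m s]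

theorem mem_equivariantMaps [Monoid M] [MulAction M S] {σ : Representation k M W} {u : S → W} :
    u ∈ equivariantMaps σ S ↔ ∀ m s, u (m • s) = σ m (u s) :=
  Iff.rfl

/-- The tensor product of the representation `σ` with the linear character `χ`, realised on the
space of `σ`. -/
def characterTwist [Monoid M] (χ : M →* k) (σ : Representation k M W) :
    Representation k M W where
  toFun m := χ m • σ m
  map_one' := by simp
  map_mul' a b := by rw [map_mul, map_mul, smul_mul_smul_comm]

variable [Group M] [MulAction M S]

variable (M) in
theorem exists_smul_out_eq (s : S) :
    ∃ m : M, m • (Quotient.mk (MulAction.orbitRel M S) s).out = s :=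
  (MulAction.orbitRel M S).symm (Quotient.mk_out s)

variable (M) in
/-- A group element carrying the chosen representative of the orbit of `s` to `s`. It is unique
when the action is free. -/
noncomputable def fromOrbitRep (s : S) : M :=
  (exists_smul_out_eq M s).choose

theorem fromOrbitRep_smul_out (s : S) :
    fromOrbitRep M s • (Quotient.mk (MulAction.orbitRel M S) s).out = s :=
  (exists_smul_out_eq M s).choose_spec

theorem mk_orbitRel_smul (m : M) (s : S) :
    Quotient.mk (MulAction.orbitRel M S) (m • s) = Quotient.mk _ s :=
  Quotient.sound (MulAction.mem_orbit s m)

theorem fromOrbitRep_smul [IsCancelSMul M S] (m : M) (s : S) :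
    fromOrbitRep M (m • s) = m * fromOrbitRep M s := by
  apply IsCancelSMul.right_cancel _ _ (Quotient.mk (MulAction.orbitRel M S) s).out
  rw [mul_smul, fromOrbitRep_smul_out, ← mk_orbitRel_smul m s, fromOrbitRep_smul_out]

theorem fromOrbitRep_out [IsCancelSMul M S] (q : MulAction.orbitRel.Quotient M S) :
    fromOrbitRep M q.out = 1 := by
  apply IsCancelSMul.eq_one_of_smul (x := q.out)
  simpa only [Quotient.out_eq] using fromOrbitRep_smul_out (M := M) q.out

/-- On a free `M`-set, restriction to the chosen orbit representatives identifies the equivariant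
maps into `W` with the arbitrary `W`-valued functions on the set of orbits. -/
noncomputable def equivariantMapsEquiv [IsCancelSMul M S] (σ : Representation k M W) :
    equivariantMaps σ S ≃ₗ[k] (MulAction.orbitRel.Quotient M S → W) where
  toFun u q := u.1 q.out
  map_add' _ _ := rfl
  map_smul' _ _ := rfl
  invFun w := ⟨fun s => σ (fromOrbitRep M s) (w (Quotient.mk _ s)), fun m s => by
    beta_reduce
    rw [fromOrbitRep_smul, mk_orbitRel_smul, map_mul, Module.End.mul_apply]⟩
  left_inv u := by
    ext s
    simp only [← mem_equivariantMaps.1 u.2, fromOrbitRep_smul_out]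
  right_inv w := by
    ext q
    simp only [fromOrbitRep_out, Quotient.out_eq, map_one, Module.End.one_apply]

theorem card_quot_exists_smul_eq :
    Nat.card (Quot fun s t : S => ∃ m : M, m • s = t) =
      Nat.card (MulAction.orbitRel.Quotient M S) :=
  Nat.card_congr <| Quot.congrRight fun _ _ => Setoid.comm' (MulAction.orbitRel M S)

end EquivariantMaps

theorem finrank_equivariantMaps {k M W S : Type*} [CommRing k] [StrongRankCondition k]
    [AddCommGroup W] [Module k W] [Module.Free k W] [Module.Finite k W] [Group M] [MulAction M S]
    [IsCancelSMul M S] [Finite S] (σ : Representation k M W) :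
    Module.finrank k (equivariantMaps σ S) =
      Module.finrank k W * Nat.card (MulAction.orbitRel.Quotient M S) := by
  have := Fintype.ofFinite (MulAction.orbitRel.Quotient M S)
  rw [(equivariantMapsEquiv σ).finrank_eq, Module.finrank_pi_fintype, Finset.sum_const,
    Finset.card_univ, smul_eq_mul, mul_comm, Nat.card_eq_fintype_card]

section Frameworks

omit [Fintype Γ]

section SymmetricSpaces

omit [Fintype V] [DecidableEq V]

theorem mem_Xchi {θ : Γ →* Equiv.Perm V} {τ : Γ →* (X ≃ₗᵢ[ℝ] X)} {χ : Γ →* ℂ}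
    {u : V → ℂ ⊗[ℝ] X} :
    u ∈ Xchi θ τ χ ↔ ∀ γ v, u (θ γ v) = χ γ • tauC τ γ (u v) := by
  simp [Xchi, sub_eq_zero]

theorem mem_Ychi {G : SimpleGraph V} {θ : Γ →* Equiv.Perm V}
    {hadj : ∀ (γ : Γ) (u v : V), G.Adj u v ↔ G.Adj (θ γ u) (θ γ v)} {χ : Γ →* ℂ}
    {y : G.edgeSet → ℂ} :
    y ∈ Ychi G θ hadj χ ↔ ∀ γ e, y (edgeAct G θ hadj γ e) = χ γ * y e := by
  simp [Ychi, sub_eq_zero]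

theorem mem_Tchi {τ : Γ →* (X ≃ₗᵢ[ℝ] X)} {χ : Γ →* ℂ} {η : X → ℂ ⊗[ℝ] X} :
    η ∈ Tchi τ χ ↔ η ∈ TXC X ∧ ∀ γ x, η (τ γ x) = χ γ • tauC τ γ (η x) := by
  simp [Tchi, sub_eq_zero]

/-- The complexification of the isometric representation `τ`. -/
noncomputable def tauCRep (τ : Γ →* (X ≃ₗᵢ[ℝ] X)) : Representation ℂ Γ (ℂ ⊗[ℝ] X) where
  toFun := tauC τ
  map_one' := by ext; simp [tauC]
  map_mul' a b := by ext; simp [tauC]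

/-- The action of `Γ` on the edges of `G` induced by its action `θ` on the vertices. -/
abbrev edgeMulAction (G : SimpleGraph V) (θ : Γ →* Equiv.Perm V)
    (hadj : ∀ (γ : Γ) (u v : V), G.Adj u v ↔ G.Adj (θ γ u) (θ γ v)) :
    MulAction Γ G.edgeSet where
  smul := edgeAct G θ hadj
  one_smul e := Subtype.ext <| by
    change Sym2.map (θ 1) e.1 = e.1
    simp
  mul_smul a b e := Subtype.ext <| by
    change Sym2.map (θ (a * b)) e.1 = Sym2.map (θ a) (Sym2.map (θ b) e.1)
    simp [Sym2.map_map, Equiv.Perm.coe_mul]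

theorem finrank_Xchi [Finite V] [FiniteDimensional ℝ X] (θ : Γ →* Equiv.Perm V)
    (hfreeV : ∀ γ : Γ, γ ≠ 1 → ∀ v : V, θ γ v ≠ v) (τ : Γ →* (X ≃ₗᵢ[ℝ] X)) (χ : Γ →* ℂ) :
    Module.finrank ℂ (Xchi θ τ χ) = Module.finrank ℝ X * V0card θ := by
  let _ : MulAction Γ V := MulAction.compHom V θ
  have : IsCancelSMul Γ V := isCancelSMul_iff_eq_one_of_smul_eq.2 fun γ v hv =>
    of_not_not fun hγ => hfreeV γ hγ v hv
  have hX : Xchi θ τ χ = equivariantMaps (characterTwist χ (tauCRep τ)) V :=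
    Submodule.ext fun _ => mem_Xchi
  rw [hX, finrank_equivariantMaps, Module.finrank_baseChange, ← card_quot_exists_smul_eq]
  rfl

theorem finrank_Ychi [Finite V] (G : SimpleGraph V) (θ : Γ →* Equiv.Perm V)
    (hadj : ∀ (γ : Γ) (u v : V), G.Adj u v ↔ G.Adj (θ γ u) (θ γ v))
    (hfreeE : ∀ γ : Γ, γ ≠ 1 → ∀ e : G.edgeSet, edgeAct G θ hadj γ e ≠ e) (χ : Γ →* ℂ) :
    Module.finrank ℂ (Ychi G θ hadj χ) = E0card G θ hadj := by
  let _ : MulAction Γ G.edgeSet := edgeMulAction G θ hadj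
  have : IsCancelSMul Γ G.edgeSet := isCancelSMul_iff_eq_one_of_smul_eq.2 fun γ e he =>
    of_not_not fun hγ => hfreeE γ hγ e he
  have hY : Ychi G θ hadj χ =
      equivariantMaps (characterTwist χ (Representation.trivial ℂ Γ ℂ)) G.edgeSet :=
    Submodule.ext fun _ => mem_Ychi
  rw [hY, finrank_equivariantMaps, Module.finrank_self, one_mul, ← card_quot_exists_smul_eq]
  rfl

theorem rhoC_mem_Xchi {p : V → X} {θ : Γ →* Equiv.Perm V} {τ : Γ →* (X ≃ₗᵢ[ℝ] X)}
    (hsymm : ∀ (γ : Γ) (v : V), τ γ (p v) = p (θ γ v)) {χ : Γ →* ℂ} {η : X → ℂ ⊗[ℝ] X}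
    (hη : η ∈ Tchi τ χ) : rhoC p η ∈ Xchi θ τ χ :=
  mem_Xchi.2 fun γ v => (congrArg η (hsymm γ v)).symm.trans ((mem_Tchi.1 hη).2 γ (p v))

end SymmetricSpaces

variable {G : SimpleGraph V} [Fintype G.edgeSet] {p : V → X}

section EdgeLengths

omit [Fintype V] [DecidableEq V]

theorem dfR_eq_lineDeriv [Finite V] (hwp : WellPositioned G p) (u : V → X) (e : G.edgeSet) :
    dfR G p u e = lineDeriv ℝ (fun x => fG G x e) p u := by
  cases nonempty_fintype V
  have he : HasFDerivAt (fun x => fG G x e) _ p := hasFDerivAt_pi'.1 hwp.hasFDerivAt e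
  exact (he.hasLineDerivAt u).lineDeriv.symm

omit [NormedSpace ℝ X] in
theorem fG_eq_of_rigidMotion {α : X → ℝ → X} (hα : IsRigidMotion α) {t : ℝ}
    (ht : t ∈ Set.Icc (-1 : ℝ) 1) : fG G (fun v => α (p v) t) = fG G p := by
  ext ⟨e, he⟩
  induction e using Sym2.ind with
  | _ v w => exact hα.2.2 (p v) (p w) t ht

theorem dfR_infRigidMotion [Finite V] (hwp : WellPositioned G p) {η : X → X}
    (hη : IsInfRigidMotion η) : dfR G p (fun v => η (p v)) = 0 := by
  cases nonempty_fintype V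
  obtain ⟨α, hα, hderiv⟩ := hη
  have hpath : HasDerivAt (fun t v => α (p v) t) (fun v => η (p v)) 0 :=
    hasDerivAt_pi.2 fun v => hderiv (p v)
  have hlengths : HasDerivAt (fun t => fG G fun v => α (p v) t)
      (dfR G p fun v => η (p v)) 0 :=
    hwp.hasFDerivAt.comp_hasDerivAt_of_eq 0 hpath (funext fun v => (hα.2.1 (p v)).symm)
  have hconst : (fun t => fG G fun v => α (p v) t) =ᶠ[nhds 0] fun _ => fG G p :=
    Filter.mem_of_superset (Icc_mem_nhds neg_one_lt_zero one_pos)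
      fun _ ht => fG_eq_of_rigidMotion hα ht
  exact hlengths.unique ((hasDerivAt_const _ _).congr_of_eventuallyEq hconst)

variable {θ : Γ →* Equiv.Perm V} {hadj : ∀ (γ : Γ) (u v : V), G.Adj u v ↔ G.Adj (θ γ u) (θ γ v)}
  {τ : Γ →* (X ≃ₗᵢ[ℝ] X)} {γ : Γ}

theorem fG_edgeAct {x y : V → X} (hxy : ∀ v, y (θ γ v) = τ γ (x v)) (e : G.edgeSet) :
    fG G y (edgeAct G θ hadj γ e) = fG G x e := by
  obtain ⟨e, he⟩ := e
  induction e using Sym2.ind with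
  | _ v w =>
    change ‖y (θ γ v) - y (θ γ w)‖ = ‖x v - x w‖
    rw [hxy, hxy, ← map_sub, LinearIsometryEquiv.norm_map]

theorem dfR_edgeAct [Finite V] (hwp : WellPositioned G p)
    (hsymm : ∀ v, τ γ (p v) = p (θ γ v)) {u w : V → X} (huw : ∀ v, w (θ γ v) = τ γ (u v))
    (e : G.edgeSet) :
    dfR G p w (edgeAct G θ hadj γ e) = dfR G p u e := by
  have hline : ∀ t : ℝ, fG G (p + t • w) (edgeAct G θ hadj γ e) = fG G (p + t • u) e :=
    fun t => fG_edgeAct (τ := τ) (fun v => by simp [huw, hsymm]) e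
  simp only [dfR_eq_lineDeriv hwp, lineDeriv, hline]

end EdgeLengths

section Complexification

theorem dfC_one_tmul (u : V → X) (e : G.edgeSet) :
    dfC G p (fun v => (1 : ℂ) ⊗ₜ[ℝ] u v) e = (dfR G p u e : ℂ) := by
  have hu : dfR G p u e = ∑ v, phiEdge G p e v (u v) := by
    conv_lhs => rw [← Finset.univ_sum_single u]
    simp [phiEdge]
  simp [hu, dfC, cplxFunctional]

theorem dfC_rhoC (hwp : WellPositioned G p) {η : X → ℂ ⊗[ℝ] X} (hη : η ∈ TXC X) :
    dfC G p (rhoC p η) = 0 := by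
  have hspan : TXC X ≤ LinearMap.ker (dfC G p ∘ₗ rhoC p) := by
    refine Submodule.span_le.2 ?_
    rintro _ ⟨η, hη, rfl⟩
    ext e
    exact (dfC_one_tmul (fun v => η (p v)) e).trans (by simp [dfR_infRigidMotion hwp hη])
  exact hspan hη

variable {θ : Γ →* Equiv.Perm V} {hadj : ∀ (γ : Γ) (u v : V), G.Adj u v ↔ G.Adj (θ γ u) (θ γ v)}
  {τ : Γ →* (X ≃ₗᵢ[ℝ] X)} {γ : Γ}

theorem dfC_edgeAct (hwp : WellPositioned G p) (hsymm : ∀ v, τ γ (p v) = p (θ γ v))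
    (u : V → ℂ ⊗[ℝ] X) (e : G.edgeSet) :
    dfC G p (fun v => tauC τ γ (u ((θ γ).symm v))) (edgeAct G θ hadj γ e) = dfC G p u e := by
  let act : (V → ℂ ⊗[ℝ] X) →ₗ[ℂ] (V → ℂ ⊗[ℝ] X) :=
    (tauC τ γ).compLeft V ∘ₗ LinearMap.funLeft ℂ _ (θ γ).symm
  suffices LinearMap.proj (edgeAct G θ hadj γ e) ∘ₗ dfC G p ∘ₗ act = LinearMap.proj e ∘ₗ dfC G p
    from LinearMap.congr_fun this u
  refine linearMap_ext_one_tmul fun u => ?_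
  have hact : act (fun v => 1 ⊗ₜ u v) = fun v => 1 ⊗ₜ τ γ (u ((θ γ).symm v)) := by
    ext v
    simp [act, tauC, LinearMap.funLeft]
  simp only [LinearMap.comp_apply, LinearMap.proj_apply, hact, dfC_one_tmul]
  rw [dfR_edgeAct hwp hsymm fun v => by rw [Equiv.symm_apply_apply]]

theorem dfC_mem_Ychi (hwp : WellPositioned G p)
    (hsymm : ∀ (γ : Γ) (v : V), τ γ (p v) = p (θ γ v)) {χ : Γ →* ℂ} {u : V → ℂ ⊗[ℝ] X}
    (hu : u ∈ Xchi θ τ χ) : dfC G p u ∈ Ychi G θ hadj χ := by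
  refine mem_Ychi.2 fun γ e => ?_
  have hu' : u = χ γ • fun v => tauC τ γ (u ((θ γ).symm v)) := by
    ext v
    simpa using mem_Xchi.1 hu γ ((θ γ).symm v)
  conv_lhs => rw [hu']
  rw [map_smul, Pi.smul_apply, smul_eq_mul, dfC_edgeAct hwp (hsymm γ)]

end Complexification

section FrameworkComplex

variable {θ : Γ →* Equiv.Perm V} {hadj : ∀ (γ : Γ) (u v : V), G.Adj u v ↔ G.Adj (θ γ u) (θ γ v)}
  {τ : Γ →* (X ≃ₗᵢ[ℝ] X)} {χ : Γ →* ℂ}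

/-- The map `ρ_χ(𝒢) : 𝒯_χ(X) → X_χ` of the `χ`-symmetric framework complex. -/
noncomputable def chiRestriction (hsymm : ∀ (γ : Γ) (v : V), τ γ (p v) = p (θ γ v)) (χ : Γ →* ℂ) :
    Tchi τ χ →ₗ[ℂ] Xchi θ τ χ :=
  (rhoC p).restrict fun _ => rhoC_mem_Xchi hsymm

/-- The map `R_χ(𝒢) : X_χ → Y_χ` of the `χ`-symmetric framework complex. -/
noncomputable def chiRigidityMap (hadj : ∀ (γ : Γ) (u v : V), G.Adj u v ↔ G.Adj (θ γ u) (θ γ v))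
    (hwp : WellPositioned G p) (hsymm : ∀ (γ : Γ) (v : V), τ γ (p v) = p (θ γ v)) (χ : Γ →* ℂ) :
    Xchi θ τ χ →ₗ[ℂ] Ychi G θ hadj χ :=
  (dfC G p).restrict fun _ => dfC_mem_Ychi hwp hsymm

theorem chiRigidityMap_comp_chiRestriction (hwp : WellPositioned G p)
    (hsymm : ∀ (γ : Γ) (v : V), τ γ (p v) = p (θ γ v)) :
    chiRigidityMap hadj hwp hsymm χ ∘ₗ chiRestriction hsymm χ = 0 :=
  LinearMap.ext fun η => Subtype.ext <| dfC_rhoC hwp (mem_Tchi.1 η.2).1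

omit [Fintype V] [DecidableEq V] in
theorem ChiFull.injective_chiRestriction (hfull : ChiFull G p τ χ)
    (hsymm : ∀ (γ : Γ) (v : V), τ γ (p v) = p (θ γ v)) :
    Function.Injective (chiRestriction hsymm χ) :=
  (injective_iff_map_eq_zero _).2 fun η hη =>
    Subtype.ext <| hfull η.1 η.2 (congrArg Subtype.val hη)

theorem ChiRigid.exact (hrigid : ChiRigid G p θ τ χ) (hwp : WellPositioned G p)
    (hsymm : ∀ (γ : Γ) (v : V), τ γ (p v) = p (θ γ v)) :
    Function.Exact (chiRestriction hsymm χ) (chiRigidityMap hadj hwp hsymm χ) := by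
  refine fun u => ⟨fun hu => ?_, ?_⟩
  · obtain ⟨η, hη, hηu⟩ := hrigid u.1 u.2 (congrArg Subtype.val hu)
    exact ⟨⟨η, hη⟩, Subtype.ext hηu⟩
  · rintro ⟨η, rfl⟩
    exact LinearMap.congr_fun (chiRigidityMap_comp_chiRestriction hwp hsymm) η

theorem ChiIndependent.surjective_chiRigidityMap (hindep : ChiIndependent G p θ hadj τ χ)
    (hwp : WellPositioned G p) (hsymm : ∀ (γ : Γ) (v : V), τ γ (p v) = p (θ γ v)) :
    Function.Surjective (chiRigidityMap hadj hwp hsymm χ) := fun y => by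
  obtain ⟨u, hu, huy⟩ := hindep y.1 y.2
  exact ⟨⟨u, hu⟩, Subtype.ext huy⟩

end FrameworkComplex

theorem orbit_counts_general
    [FiniteDimensional ℝ X] (G : SimpleGraph V) [Fintype G.edgeSet] (p : V → X)
    (hwp : WellPositioned G p)
    (θ : Γ →* Equiv.Perm V)
    (hadj : ∀ (γ : Γ) (u v : V), G.Adj u v ↔ G.Adj (θ γ u) (θ γ v))
    (hfreeV : ∀ γ : Γ, γ ≠ 1 → ∀ v : V, θ γ v ≠ v)
    (hfreeE : ∀ γ : Γ, γ ≠ 1 → ∀ e : G.edgeSet, edgeAct G θ hadj γ e ≠ e)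
    (τ : Γ →* (X ≃ₗᵢ[ℝ] X))
    (hsymm : ∀ (γ : Γ) (v : V), τ γ (p v) = p (θ γ v))
    (χ : Γ →* ℂ)
    (hfull : ChiFull G p τ χ) :
    (ChiRigid G p θ τ χ →
      (Module.finrank ℝ X : ℤ) * V0card (V := V) θ - Module.finrank ℂ (Tchi τ χ) ≤
        (E0card G θ hadj : ℤ)) ∧
    (ChiIndependent G p θ hadj τ χ →
      (E0card G θ hadj : ℤ) ≤
        (Module.finrank ℝ X : ℤ) * V0card (V := V) θ - Module.finrank ℂ (Tchi τ χ)) ∧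
    (ChiRigid G p θ τ χ → ChiIndependent G p θ hadj τ χ →
      (E0card G θ hadj : ℤ) =
        (Module.finrank ℝ X : ℤ) * V0card (V := V) θ - Module.finrank ℂ (Tchi τ χ)) := by
  have hX := finrank_Xchi θ hfreeV τ χ
  have hY := finrank_Ychi G θ hadj hfreeE χ
  have hinj := hfull.injective_chiRestriction hsymm
  have hlower (hrigid : ChiRigid G p θ τ χ) :=
    finrank_le_add_of_exact hinj (hrigid.exact (hadj := hadj) hwp hsymm)
  have hupper (hindep : ChiIndependent G p θ hadj τ χ) :=
    add_finrank_le_of_comp_eq_zero hinj (hindep.surjective_chiRigidityMap hwp hsymm)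
      (chiRigidityMap_comp_chiRestriction hwp hsymm)
  rw [hX, hY] at hlower hupper
  zify at hlower hupper
  refine ⟨fun hrigid => ?_, fun hindep => ?_, fun hrigid hindep => ?_⟩
  · linarith [hlower hrigid]
  · linarith [hupper hindep]
  · linarith [hlower hrigid, hupper hindep]

end Frameworks

theorem orbit_counts
    (hd : 2 ≤ Module.finrank ℝ X) [FiniteDimensional ℝ X]
    (G : SimpleGraph V) [Fintype G.edgeSet] (p : V → X)
    (hpinj : Function.Injective p)
    (hwp : WellPositioned G p)
    (θ : Γ →* Equiv.Perm V)
    (hadj : ∀ (γ : Γ) (u v : V), G.Adj u v ↔ G.Adj (θ γ u) (θ γ v))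
    (hfreeV : ∀ γ : Γ, γ ≠ 1 → ∀ v : V, θ γ v ≠ v)
    (hfreeE : ∀ γ : Γ, γ ≠ 1 → ∀ e : G.edgeSet, edgeAct G θ hadj γ e ≠ e)
    (τ : Γ →* (X ≃ₗᵢ[ℝ] X))
    (hsymm : ∀ (γ : Γ) (v : V), τ γ (p v) = p (θ γ v))
    (χ : Γ →* ℂ)
    (hfull : ChiFull G p τ χ) :
    (ChiRigid G p θ τ χ →
      (Module.finrank ℝ X : ℤ) * V0card (V := V) θ - Module.finrank ℂ (Tchi τ χ) ≤
        (E0card G θ hadj : ℤ)) ∧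
    (ChiIndependent G p θ hadj τ χ →
      (E0card G θ hadj : ℤ) ≤
        (Module.finrank ℝ X : ℤ) * V0card (V := V) θ - Module.finrank ℂ (Tchi τ χ)) ∧
    (ChiRigid G p θ τ χ → ChiIndependent G p θ hadj τ χ →
      (E0card G θ hadj : ℤ) =
        (Module.finrank ℝ X : ℤ) * V0card (V := V) θ - Module.finrank ℂ (Tchi τ χ)) := by
  exact orbit_counts_general G p hwp θ hadj hfreeV hfreeE τ hsymm χ hfull

end Stmt6
end

section
/- Let X be a finite-dimensional real normed vector space of dimension d ≥ 2, let Γ be a finite abelian group, let τ : Γ → Isom(X) be a group homomorphism and let χ ∈ Γ̂. If 𝒯(X) is minimal, then dim_ℂ 𝒯_χ(X) = dim_ℂ ( ⋂_{γ∈Γ} ker(τ(γ) − \overline{χ(γ)}·I) ), where each τ(γ) is regarded as a complex-linear operator on X_ℂ and I is the identity on X_ℂ. -/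
/-!
Statement 7 (Lemma 2.13 / lem:dimension): if `𝒯(X)` is minimal then
`dim_ℂ 𝒯_χ(X) = dim_ℂ (⋂_γ ker (τ(γ) - conj (χ γ) · I))`.
-/

open scoped TensorProduct

namespace Stmt7

variable {X : Type} [NormedAddCommGroup X] [NormedSpace ℝ X]
variable {Γ : Type} [CommGroup Γ] [Fintype Γ]

def IsRigidMotion (α : X → ℝ → X) : Prop :=
  (∀ x : X, ContinuousOn (α x) (Set.Icc (-1 : ℝ) 1)) ∧
    (∀ x : X, α x 0 = x) ∧
    (∀ x y : X, ∀ t ∈ Set.Icc (-1 : ℝ) 1, ‖α x t - α y t‖ = ‖x - y‖)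

def IsInfRigidMotion (η : X → X) : Prop :=
  ∃ α : X → ℝ → X, IsRigidMotion α ∧ ∀ x : X, HasDerivAt (α x) (η x) 0

/-- `𝒯(X)` is minimal: every infinitesimal rigid motion is a constant vector field. -/
def MinimalT (X : Type) [NormedAddCommGroup X] [NormedSpace ℝ X] : Prop :=
  ∀ η : X → X, IsInfRigidMotion η → ∃ x0 : X, ∀ x : X, η x = x0

noncomputable def TXC (X : Type) [NormedAddCommGroup X] [NormedSpace ℝ X] :
    Submodule ℂ (X → ℂ ⊗[ℝ] X) :=
  Submodule.span ℂ
    {η' | ∃ η : X → X, IsInfRigidMotion η ∧ η' = fun x => (1 : ℂ) ⊗ₜ[ℝ] η x}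

noncomputable def tauC (τ : Γ →* (X ≃ₗᵢ[ℝ] X)) (γ : Γ) :
    (ℂ ⊗[ℝ] X) →ₗ[ℂ] (ℂ ⊗[ℝ] X) :=
  LinearMap.baseChange ℂ ((τ γ).toLinearEquiv.toLinearMap)

noncomputable def Tchi (τ : Γ →* (X ≃ₗᵢ[ℝ] X)) (χ : Γ →* ℂ) :
    Submodule ℂ (X → ℂ ⊗[ℝ] X) :=
  TXC X ⊓
    ⨅ (γ : Γ), ⨅ (x : X),
      LinearMap.ker
        ((LinearMap.proj (R := ℂ) (φ := fun _ : X => ℂ ⊗[ℝ] X) (τ γ x)) -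
          χ γ • ((tauC τ γ).comp (LinearMap.proj (R := ℂ) (φ := fun _ : X => ℂ ⊗[ℝ] X) x)))

/-!
Every constant vector field is an infinitesimal rigid motion, realised by translations. Under
minimality `𝒯(X; ℂ)` is therefore exactly the copy of `ℂ ⊗ X` given by the constant fields. On the
constant field with value `v`, the condition defining `𝒯_χ(X)` reads `v = χ(γ) τ(γ) v`, which is an
eigenvalue equation for `τ(γ)` with eigenvalue `χ(γ)⁻¹ = conj (χ γ)`.
-/

theorem span_range_one_tmul (R A M : Type*) [CommSemiring R] [Semiring A] [Algebra R A]
    [AddCommMonoid M] [Module R M] :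
    Submodule.span A (Set.range (TensorProduct.mk R A M 1)) = ⊤ := by
  simpa using (Submodule.baseChange_span (R := R) A (Set.univ : Set M)).symm

theorem mem_ker_sub_conj_smul_id_iff {𝕜 V : Type*} [RCLike 𝕜] [AddCommGroup V] [Module 𝕜 V]
    {z : 𝕜} (hz : ‖z‖ = 1) (T : V →ₗ[𝕜] V) (v : V) :
    v ∈ LinearMap.ker (T - (starRingEnd 𝕜) z • LinearMap.id) ↔ v = z • T v := by
  have hz₀ : z ≠ 0 := norm_ne_zero_iff.1 (hz ▸ one_ne_zero)
  rw [← RCLike.inv_eq_conj hz, LinearMap.mem_ker, LinearMap.sub_apply, LinearMap.smul_apply,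
    LinearMap.id_apply, sub_eq_zero, eq_inv_smul_iff₀ hz₀, eq_comm]

theorem isInfRigidMotion_const (v : X) : IsInfRigidMotion fun _ : X => v := by
  refine ⟨fun x t => x + t • v, ⟨fun x => by fun_prop, fun x => by simp, fun x y t _ => by simp⟩,
    fun x => ?_⟩
  simpa using ((hasDerivAt_id (0 : ℝ)).smul_const v).const_add x

theorem range_const_le_TXC :
    LinearMap.range (LinearMap.const : ℂ ⊗[ℝ] X →ₗ[ℂ] X → ℂ ⊗[ℝ] X) ≤ TXC X := by
  rw [LinearMap.range_eq_map, ← span_range_one_tmul ℝ ℂ X, Submodule.map_span, Submodule.span_le]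
  rintro _ ⟨_, ⟨v, rfl⟩, rfl⟩
  exact Submodule.subset_span ⟨_, isInfRigidMotion_const v, rfl⟩

theorem TXC_eq_range_const (hmin : MinimalT X) :
    TXC X = LinearMap.range (LinearMap.const : ℂ ⊗[ℝ] X →ₗ[ℂ] X → ℂ ⊗[ℝ] X) := by
  refine le_antisymm (Submodule.span_le.2 ?_) range_const_le_TXC
  rintro _ ⟨η, hη, rfl⟩
  obtain ⟨v, hv⟩ := hmin η hη
  exact ⟨(1 : ℂ) ⊗ₜ[ℝ] v, funext fun x => by rw [hv x, LinearMap.const_apply, Function.const_apply]⟩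

section Character

variable {G : Type} [CommGroup G] (τ : G →* (X ≃ₗᵢ[ℝ] X)) {χ : G →* ℂ}

theorem mem_Tchi_iff {η : X → ℂ ⊗[ℝ] X} :
    η ∈ Tchi τ χ ↔ η ∈ TXC X ∧ ∀ γ x, η (τ γ x) = χ γ • tauC τ γ (η x) := by
  simp [Tchi, sub_eq_zero]

theorem comap_const_Tchi (hχ : ∀ γ, ‖χ γ‖ = 1) :
    (Tchi τ χ).comap LinearMap.const =
      ⨅ γ, LinearMap.ker (tauC τ γ - (starRingEnd ℂ) (χ γ) • LinearMap.id) := by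
  ext v
  have hv : Function.const X v ∈ TXC X := range_const_le_TXC ⟨v, rfl⟩
  simp only [Submodule.mem_comap, LinearMap.const_apply, mem_Tchi_iff, hv, true_and,
    Function.const_apply, forall_const, Submodule.mem_iInf, mem_ker_sub_conj_smul_id_iff (hχ _)]

theorem Tchi_eq_map_const (hχ : ∀ γ, ‖χ γ‖ = 1) (hmin : MinimalT X) :
    Tchi τ χ = (⨅ γ, LinearMap.ker (tauC τ γ - (starRingEnd ℂ) (χ γ) • LinearMap.id)).map
      LinearMap.const := by
  have hle : Tchi τ χ ≤ LinearMap.range LinearMap.const :=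
    inf_le_left.trans_eq (TXC_eq_range_const hmin)
  rw [← comap_const_Tchi τ hχ, Submodule.map_comap_eq_of_le hle]

theorem dim_Tchi_of_minimal_general (hχ : ∀ γ, ‖χ γ‖ = 1) (hmin : MinimalT X) :
    Module.rank ℂ (Tchi τ χ) =
      Module.rank ℂ
        (↥(⨅ γ, LinearMap.ker (tauC τ γ - (starRingEnd ℂ) (χ γ) • LinearMap.id))) := by
  rw [Tchi_eq_map_const τ hχ hmin]
  exact (Submodule.equivMapOfInjective _ Function.const_injective _).rank_eq.symm

end Character

theorem dim_Tchi_of_minimal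
    (hd : 2 ≤ Module.finrank ℝ X) [FiniteDimensional ℝ X]
    (τ : Γ →* (X ≃ₗᵢ[ℝ] X)) (χ : Γ →* ℂ)
    (hmin : MinimalT X) :
    Module.finrank ℂ (Tchi τ χ) =
      Module.finrank ℂ
        (↥(⨅ γ : Γ, LinearMap.ker (tauC τ γ - (starRingEnd ℂ) (χ γ) • LinearMap.id))) := by
  have hχ (γ : Γ) : ‖χ γ‖ = 1 := (χ.isOfFinOrder (isOfFinOrder_of_finite γ)).norm_eq_one
  exact congrArg Cardinal.toNat (dim_Tchi_of_minimal_general τ hχ hmin)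

end Stmt7
end

section
/- Let X be a finite-dimensional real normed vector space of dimension d ≥ 2, let n ≥ 2 and let τ : ℤ_n → Isom(X) be a group homomorphism. If 𝒯(X) is minimal, then for each j = 0,1,…,n−1, dim_ℂ 𝒯_{χ_j}(X) = dim_ℂ ker(τ(ω) − \overline{ω}^j·I), where τ(ω) is regarded as a complex-linear operator on X_ℂ and I is the identity on X_ℂ. -/
/-!
Statement 8 (Lemma 2.14 / lem:dimensionCyclic): for a representation of the cyclic
group `ℤ_n = ⟨ω⟩` with `𝒯(X)` minimal, `dim_ℂ 𝒯_{χ_j}(X) = dim_ℂ ker (τ(ω) - ω̄^j I)`.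
-/

open scoped TensorProduct

namespace Stmt8

variable {X : Type} [NormedAddCommGroup X] [NormedSpace ℝ X]
variable {Γ : Type} [CommGroup Γ] [Fintype Γ]

def IsRigidMotion (α : X → ℝ → X) : Prop :=
  (∀ x : X, ContinuousOn (α x) (Set.Icc (-1 : ℝ) 1)) ∧
    (∀ x : X, α x 0 = x) ∧
    (∀ x y : X, ∀ t ∈ Set.Icc (-1 : ℝ) 1, ‖α x t - α y t‖ = ‖x - y‖)

def IsInfRigidMotion (η : X → X) : Prop :=
  ∃ α : X → ℝ → X, IsRigidMotion α ∧ ∀ x : X, HasDerivAt (α x) (η x) 0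

def MinimalT (X : Type) [NormedAddCommGroup X] [NormedSpace ℝ X] : Prop :=
  ∀ η : X → X, IsInfRigidMotion η → ∃ x0 : X, ∀ x : X, η x = x0

noncomputable def TXC (X : Type) [NormedAddCommGroup X] [NormedSpace ℝ X] :
    Submodule ℂ (X → ℂ ⊗[ℝ] X) :=
  Submodule.span ℂ
    {η' | ∃ η : X → X, IsInfRigidMotion η ∧ η' = fun x => (1 : ℂ) ⊗ₜ[ℝ] η x}

noncomputable def tauC (τ : Γ →* (X ≃ₗᵢ[ℝ] X)) (γ : Γ) :
    (ℂ ⊗[ℝ] X) →ₗ[ℂ] (ℂ ⊗[ℝ] X) :=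
  LinearMap.baseChange ℂ ((τ γ).toLinearEquiv.toLinearMap)

noncomputable def Tchi (τ : Γ →* (X ≃ₗᵢ[ℝ] X)) (χ : Γ →* ℂ) :
    Submodule ℂ (X → ℂ ⊗[ℝ] X) :=
  TXC X ⊓
    ⨅ (γ : Γ), ⨅ (x : X),
      LinearMap.ker
        ((LinearMap.proj (R := ℂ) (φ := fun _ : X => ℂ ⊗[ℝ] X) (τ γ x)) -
          χ γ • ((tauC τ γ).comp (LinearMap.proj (R := ℂ) (φ := fun _ : X => ℂ ⊗[ℝ] X) x)))

/-- The primitive `n`-th root of unity `ω = e^{2πi/n}`. -/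
noncomputable def omega (n : ℕ) : ℂ := Complex.exp (2 * Real.pi * Complex.I / n)

/-!
Under minimality the complexified infinitesimal rigid motions are exactly the constant fields with
values in `X_ℂ`, since every translation field is an infinitesimal rigid motion. A constant field
with value `v` is `χ`-equivariant iff `v` is invariant under the twisted representation
`γ ↦ χ γ • τ γ`, and invariance only has to be tested at a generator `g`, where it says
`τ g v = (χ g)⁻¹ • v`.
-/

section Twist

variable {k G V : Type*} [Field k] [Group G] [AddCommGroup V] [Module k V]

/-- The twist `γ ↦ χ γ • ρ γ` of a representation by a one-dimensional character, that is,
`χ ⊗ ρ` realised on the space of `ρ`. -/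
def twist (ρ : Representation k G V) (χ : G →* k) : Representation k G V where
  toFun γ := χ γ • ρ γ
  map_one' := by rw [map_one, map_one, one_smul]
  map_mul' a b := by rw [map_mul, map_mul, smul_mul_smul_comm]

theorem twist_apply (ρ : Representation k G V) (χ : G →* k) (γ : G) (v : V) :
    twist ρ χ γ v = χ γ • ρ γ v := rfl

theorem invariants_twist_eq_eigenspace (ρ : Representation k G V) (χ : G →* k) {g : G}
    (hgen : ∀ x : G, x ∈ Subgroup.zpowers g) :
    (twist ρ χ).invariants = Module.End.eigenspace (ρ g) (χ g)⁻¹ := by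
  ext v
  have hχ : χ g ≠ 0 := ((Group.isUnit g).map χ).ne_zero
  rw [Representation.mem_invariants_iff_of_forall_mem_zpowers _ g hgen, twist_apply,
    Module.End.mem_eigenspace_iff, eq_inv_smul_iff₀ hχ]

end Twist

theorem inv_omega (n : ℕ) : (omega n)⁻¹ = starRingEnd ℂ (omega n) := by
  rw [omega, ← Complex.exp_neg, ← Complex.exp_conj]
  simp [neg_div, Complex.conj_ofNat]

theorem isInfRigidMotion_const (v : X) : IsInfRigidMotion (fun _ : X => v) := by
  refine ⟨fun x t => x + t • v, ⟨fun x => by fun_prop, fun x => by simp, fun x y t _ => by simp⟩,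
    fun x => ?_⟩
  simpa using ((hasDerivAt_id (0 : ℝ)).smul_const v).const_add x

theorem range_const_le_TXC : LinearMap.range (LinearMap.const (R := ℂ)) ≤ TXC X := by
  rw [LinearMap.range_eq_map, ← Submodule.baseChange_top ℂ (R := ℝ), ← Submodule.span_univ,
    Submodule.baseChange_span, Submodule.map_span, Submodule.span_le]
  rintro _ ⟨_, ⟨v, -, rfl⟩, rfl⟩
  exact Submodule.subset_span ⟨fun _ => v, isInfRigidMotion_const v, rfl⟩

theorem MinimalT.TXC_eq_range_const (hmin : MinimalT X) :
    TXC X = LinearMap.range (LinearMap.const (R := ℂ)) := by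
  refine le_antisymm (Submodule.span_le.2 ?_) range_const_le_TXC
  rintro _ ⟨η, hη, rfl⟩
  obtain ⟨v, hv⟩ := hmin η hη
  exact ⟨1 ⊗ₜ v, funext fun x => by rw [hv x]; rfl⟩

section Equivariance

variable {G : Type} [CommGroup G]

/-- The complexification of an isometric representation, bundling the operators `tauC τ γ`. -/
noncomputable def complexRep (τ : G →* (X ≃ₗᵢ[ℝ] X)) : Representation ℂ G (ℂ ⊗[ℝ] X) where
  toFun := tauC τ
  map_one' := by rw [tauC, map_one]; exact LinearMap.baseChange_id
  map_mul' a b := by rw [tauC, map_mul]; exact LinearMap.baseChange_comp _ _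

theorem mem_Tchi {τ : G →* (X ≃ₗᵢ[ℝ] X)} {χ : G →* ℂ} {η : X → ℂ ⊗[ℝ] X} :
    η ∈ Tchi τ χ ↔ η ∈ TXC X ∧ ∀ γ x, η (τ γ x) = twist (complexRep τ) χ γ (η x) := by
  simp [Tchi, Submodule.mem_iInf, sub_eq_zero, twist_apply, complexRep]

theorem const_mem_Tchi_iff {τ : G →* (X ≃ₗᵢ[ℝ] X)} {χ : G →* ℂ} {v : ℂ ⊗[ℝ] X} :
    LinearMap.const (R := ℂ) v ∈ Tchi τ χ ↔ v ∈ (twist (complexRep τ) χ).invariants := by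
  have hconst : LinearMap.const v ∈ TXC X := range_const_le_TXC ⟨v, rfl⟩
  rw [mem_Tchi, and_iff_right hconst, Representation.mem_invariants]
  simp only [LinearMap.const_apply, Function.const_apply, forall_const, eq_comm]

theorem MinimalT.Tchi_eq_map_invariants (hmin : MinimalT X) (τ : G →* (X ≃ₗᵢ[ℝ] X))
    (χ : G →* ℂ) :
    Tchi τ χ = (twist (complexRep τ) χ).invariants.map LinearMap.const := by
  have hconst : Tchi τ χ ≤ LinearMap.range (LinearMap.const (R := ℂ)) :=
    hmin.TXC_eq_range_const ▸ inf_le_left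
  rw [← Submodule.map_comap_eq_of_le hconst]
  congr 1
  ext v
  exact const_mem_Tchi_iff

theorem dim_Tchi_cyclic_general {g : G} (hgen : ∀ x : G, x ∈ Subgroup.zpowers g)
    (τ : G →* (X ≃ₗᵢ[ℝ] X)) (hmin : MinimalT X) (χ : G →* ℂ) :
    Module.rank ℂ (Tchi τ χ) =
      Module.rank ℂ (LinearMap.ker (tauC τ g - (χ g)⁻¹ • LinearMap.id)) := by
  have hker : (twist (complexRep τ) χ).invariants =
      LinearMap.ker (tauC τ g - (χ g)⁻¹ • LinearMap.id) :=
    (invariants_twist_eq_eigenspace _ χ hgen).trans Module.End.eigenspace_def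
  rw [hmin.Tchi_eq_map_invariants, hker]
  exact (Submodule.equivMapOfInjective _ Function.const_injective _).rank_eq.symm

end Equivariance

theorem dim_Tchi_cyclic
    (hd : 2 ≤ Module.finrank ℝ X) [FiniteDimensional ℝ X]
    (n : ℕ) (hn : 2 ≤ n)
    -- `Γ` is the multiplicative cyclic group of order `n`, generated by `g` (playing
    -- the role of `ω ∈ ℤ_n`)
    (g : Γ) (hord : orderOf g = n) (hgen : ∀ x : Γ, x ∈ Subgroup.zpowers g)
    (τ : Γ →* (X ≃ₗᵢ[ℝ] X))
    (hmin : MinimalT X) :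
    ∀ j : ℕ, j < n → ∀ χ : Γ →* ℂ, χ g = omega n ^ j →
      Module.finrank ℂ (Tchi τ χ) =
        Module.finrank ℂ
          (↥(LinearMap.ker (tauC τ g - ((starRingEnd ℂ) (omega n)) ^ j • LinearMap.id))) := by
  intro j _ χ hχ
  rw [← inv_omega, inv_pow, ← hχ]
  exact congrArg Cardinal.toNat (dim_Tchi_cyclic_general hgen τ hmin χ)

end Stmt8
end

section
/- Let (G_0,ψ) be a (2,2,0)-gain-tight ℤ_2-gain graph and let H_0' and H_0'' be balanced subgraphs of (G_0,ψ) with V(H_0') ∩ V(H_0'') ≠ ∅ and f(H_0') = 2 = f(H_0''). Then either (i) f(H_0' ∩ H_0'') = 4 and f(H_0' ∪ H_0'') = 0, or (ii) f(H_0' ∪ H_0'') = f(H_0' ∩ H_0'') = 2; moreover, (ii) holds if and only if H_0' ∪ H_0'' is balanced. (Here union and intersection of subgraphs are taken vertex-wise and edge-wise.) -/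
/-!
Statement 14 (Lemma 3.7 / lem:unionint): for balanced subgraphs `H'`, `H''` of a
`(2,2,0)`-gain-tight `ℤ₂`-gain graph with intersecting vertex sets and
`f(H') = f(H'') = 2`, either `f(H' ∩ H'') = 4` and `f(H' ∪ H'') = 0`, or
`f(H' ∪ H'') = f(H' ∩ H'') = 2`; the latter holds iff `H' ∪ H''` is balanced.
-/

namespace ZGain

/-- A `ℤ₂`-gain graph: a finite multigraph with gains in `ℤˣ = {1, -1}` such that
parallel edges have different gains and loops have gain `-1`. -/
structure GainGraph where
  V : Type
  E : Type
  [fintV : Fintype V]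
  [fintE : Fintype E]
  [decV : DecidableEq V]
  [decE : DecidableEq E]
  ends : E → Sym2 V
  gain : E → ℤˣ
  loop_gain : ∀ e : E, (ends e).IsDiag → gain e = -1
  no_parallel : ∀ e e' : E, e ≠ e' → ends e = ends e' → gain e ≠ gain e'

attribute [instance] GainGraph.fintV GainGraph.fintE GainGraph.decV GainGraph.decE

/-- A cycle: a nonempty closed walk, recorded as a list of (edge, initial vertex)
pairs, with pairwise distinct edges and pairwise distinct vertices.  (A loop is a
cycle of length one; a pair of parallel edges is a cycle of length two.) -/
def IsCycle (G : GainGraph) (c : List (G.E × G.V)) : Prop :=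
  ∃ h : c ≠ [],
    List.Chain' (fun st t => G.ends st.1 = s(st.2, t.2)) c ∧
    G.ends (c.getLast h).1 = s((c.getLast h).2, (c.head h).2) ∧
    (c.map Prod.fst).Nodup ∧ (c.map Prod.snd).Nodup

/-- The gain of a cycle: the product of its edge gains. -/
def cycleGain (G : GainGraph) (c : List (G.E × G.V)) : ℤˣ :=
  (c.map fun st => G.gain st.1).prod

/-- An edge set is balanced if every cycle of edges in it has gain `1`. -/
def BalancedSet (G : GainGraph) (F : Finset G.E) : Prop :=
  ∀ c : List (G.E × G.V), IsCycle G c → (∀ st ∈ c, st.1 ∈ F) → cycleGain G c = 1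

/-- The endpoints of an edge, as a finset. -/
def endsFinset (G : GainGraph) (e : G.E) : Finset G.V :=
  Sym2.lift ⟨fun a b => {a, b}, fun a b => Finset.pair_comm a b⟩ (G.ends e)

/-- The set `V(F)` of vertices incident to an edge set `F`. -/
def vertsOf (G : GainGraph) (F : Finset G.E) : Finset G.V :=
  F.biUnion fun e => endsFinset G e

/-- `(2,2,0)`-gain-sparsity. -/
def Sparse220 (G : GainGraph) : Prop :=
  (∀ F : Finset G.E, F.Nonempty → BalancedSet G F →
      (F.card : ℤ) ≤ 2 * (vertsOf G F).card - 2) ∧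
    (∀ F : Finset G.E, (F.card : ℤ) ≤ 2 * (vertsOf G F).card)

/-- `(2,2,0)`-gain-tightness. -/
def Tight220 (G : GainGraph) : Prop :=
  Sparse220 G ∧ Fintype.card G.E = 2 * Fintype.card G.V

/-- `(2,2,2)`-gain-sparsity. -/
def Sparse222 (G : GainGraph) : Prop :=
  ∀ F : Finset G.E, F.Nonempty → (F.card : ℤ) ≤ 2 * (vertsOf G F).card - 2

/-- `(2,2,2)`-gain-tightness. -/
def Tight222 (G : GainGraph) : Prop :=
  Sparse222 G ∧ (Fintype.card G.E : ℤ) = 2 * Fintype.card G.V - 2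

/-!
The function `f` is modular, so `f (H ∪ K) + f (H ∩ K) = 4`, while sparsity gives
`f (H ∩ K) ≥ 2` and `f (H ∪ K) ≥ 0`. An edge set is balanced exactly when all its gains are
differences of a vertex potential `V → ℤˣ`. Let `p` and `q` be potentials of `H` and `K`; their
quotient is constant along every edge of `H ∩ K`. If it takes a single value on `V(H ∩ K)`, then
`p` and a multiple of `q` glue to a potential of `H ∪ K`, which is therefore balanced, and sparsity
forces both values of `f` to be `2`. Otherwise the two values of the quotient split `H ∩ K` into
two nonempty balanced parts with no edge between them, each with `f ≥ 2`. Then `f (H ∩ K) = 4` and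
`f (H ∪ K) = 0`, a value that no nonempty balanced subgraph attains.
-/

section

variable {G : GainGraph} {F F' : Finset G.E} {p q t : G.V → ℤˣ} {u v : G.V} {e : G.E}
  {c : List (G.E × G.V)}

/-- A walk from one vertex to another, encoded as in `IsCycle` by the list of its edges, each
paired with the vertex from which it is traversed. -/
inductive IsWalk (G : GainGraph) : G.V → List (G.E × G.V) → G.V → Prop
  | nil (u : G.V) : IsWalk G u [] u
  | cons {u x v : G.V} {e : G.E} {c : List (G.E × G.V)} (hends : G.ends e = s(u, x))
      (hwalk : IsWalk G x c v) : IsWalk G u ((e, u) :: c) v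

lemma isWalk_cons_iff {a : G.E × G.V} :
    IsWalk G u (a :: c) v ↔ a.2 = u ∧ ∃ x, G.ends a.1 = s(u, x) ∧ IsWalk G x c v := by
  constructor
  · rintro (_ | ⟨hends, hwalk⟩)
    exact ⟨rfl, _, hends, hwalk⟩
  · rintro ⟨rfl, x, hends, hwalk⟩
    exact .cons hends hwalk

lemma isWalk_nil_iff : IsWalk G u [] v ↔ u = v :=
  ⟨by rintro ⟨⟩; rfl, by rintro rfl; exact .nil u⟩

lemma isWalk_iff_isChain (h : c ≠ []) :
    IsWalk G u c v ↔ (c.head h).2 = u ∧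
      c.IsChain (fun st t => G.ends st.1 = s(st.2, t.2)) ∧
      G.ends (c.getLast h).1 = s((c.getLast h).2, v) := by
  induction c generalizing u with
  | nil => exact absurd rfl h
  | cons a c ih =>
    rw [isWalk_cons_iff, List.head_cons]
    refine and_congr_right ?_
    rintro rfl
    cases c with
    | nil => simp [isWalk_nil_iff]
    | cons b c =>
      simp only [ih (List.cons_ne_nil b c), List.isChain_cons_cons, List.head_cons,
        List.getLast_cons_cons, and_left_comm (b := b.2 = _), exists_eq_left', and_assoc]

lemma isCycle_iff_isWalk :
    IsCycle G c ↔ c ≠ [] ∧ (∃ u, IsWalk G u c u) ∧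
      (c.map Prod.fst).Nodup ∧ (c.map Prod.snd).Nodup := by
  constructor
  · rintro ⟨h, hchain, hlast, hnodup⟩
    exact ⟨h, ⟨_, (isWalk_iff_isChain h).2 ⟨rfl, hchain, hlast⟩⟩, hnodup⟩
  · rintro ⟨h, ⟨u, hwalk⟩, hnodup⟩
    obtain ⟨rfl, hchain, hlast⟩ := (isWalk_iff_isChain h).1 hwalk
    exact ⟨h, hchain, hlast, hnodup⟩

lemma BalancedSet.mono (h : BalancedSet G F') (hF : F ⊆ F') : BalancedSet G F :=
  fun c hc hcF => h c hc fun st hst => hF (hcF st hst)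

/-- A potential of an edge set: a function on the vertices whose differences along the edges are
the gains. Differences are written as products because elements of `ℤˣ` are their own inverses. -/
def IsPotential (G : GainGraph) (p : G.V → ℤˣ) (F : Finset G.E) : Prop :=
  ∀ e ∈ F, ∀ u v, G.ends e = s(u, v) → G.gain e = p u * p v

namespace IsPotential

lemma mono (hp : IsPotential G p F') (hF : F ⊆ F') : IsPotential G p F :=
  fun e he => hp e (hF he)

lemma cycleGain_eq (hp : IsPotential G p F) (hwalk : IsWalk G u c v)
    (hF : ∀ st ∈ c, st.1 ∈ F) : cycleGain G c = p u * p v := by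
  induction hwalk with
  | nil u => simp [cycleGain, Int.units_mul_self]
  | @cons u x v e c hends _ ih =>
    rw [List.forall_mem_cons] at hF
    calc cycleGain G ((e, u) :: c) = G.gain e * cycleGain G c := by simp [cycleGain]
      _ = (p u * p x) * (p x * p v) := by rw [ih hF.2, hp e hF.1 u x hends]
      _ = p u * p v := by rw [mul_assoc, ← mul_assoc (p x), Int.units_mul_self, one_mul]

lemma balancedSet (hp : IsPotential G p F) : BalancedSet G F := by
  intro c hc hcF
  obtain ⟨-, ⟨u, hwalk⟩, -⟩ := isCycle_iff_isWalk.1 hc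
  rw [hp.cycleGain_eq hwalk hcF, Int.units_mul_self]

protected lemma insert (hp : IsPotential G p F) (hends : G.ends e = s(u, v))
    (hgain : G.gain e = p u * p v) : IsPotential G p (insert e F) := by
  intro d hd x y hxy
  rcases Finset.mem_insert.1 hd with rfl | hd
  · rcases Sym2.eq_iff.1 (hends.symm.trans hxy) with ⟨rfl, rfl⟩ | ⟨rfl, rfl⟩
    · exact hgain
    · rw [hgain, mul_comm]
  · exact hp d hd x y hxy

lemma mul_left (hp : IsPotential G p F)
    (ht : ∀ e ∈ F, ∀ u v, G.ends e = s(u, v) → t u = t v) : IsPotential G (t * p) F := by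
  intro e he u v huv
  rw [hp e he u v huv, Pi.mul_apply, Pi.mul_apply, ht e he u v huv, mul_mul_mul_comm,
    Int.units_mul_self, one_mul]

lemma mul_eq_mul_of_ends (hp : IsPotential G p F) (hq : IsPotential G q F) (he : e ∈ F)
    (hends : G.ends e = s(u, v)) : p u * q u = p v * q v := by
  have h : p u * p v = q u * q v := (hp e he u v hends).symm.trans (hq e he u v hends)
  calc p u * q u = (p u * p v) * (p v * q u) := by
        rw [mul_assoc, ← mul_assoc (p v), Int.units_mul_self, one_mul]
    _ = p v * q v := by
        rw [h, mul_comm (q u), mul_mul_mul_comm, mul_comm (q v), Int.units_mul_self, mul_one]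

end IsPotential

/-- The simple graph underlying an edge set: loops are dropped and parallel edges identified. It
serves only to describe connectivity and to supply paths. -/
def underlying (G : GainGraph) (F : Finset G.E) : SimpleGraph G.V :=
  SimpleGraph.fromEdgeSet (G.ends '' F)

lemma underlying_reachable (he : e ∈ F) (hends : G.ends e = s(u, v)) :
    (underlying G F).Reachable u v := by
  rcases eq_or_ne u v with rfl | hne
  · exact .refl u
  · exact SimpleGraph.Adj.reachable <|
      (SimpleGraph.fromEdgeSet_adj _).2 ⟨⟨e, he, hends⟩, hne⟩

lemma exists_isWalk_of_walk (w : (underlying G F).Walk u v) :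
    ∃ c : List (G.E × G.V), IsWalk G u c v ∧ (∀ st ∈ c, st.1 ∈ F) ∧
      (c.map Prod.fst).map G.ends = w.edges ∧ c.map Prod.snd ++ [v] = w.support := by
  induction w with
  | nil => exact ⟨[], .nil _, by simp⟩
  | @cons u x v hadj w ih =>
    obtain ⟨c, hwalk, hF, hedges, hsupport⟩ := ih
    obtain ⟨⟨d, hd, hends⟩, -⟩ := (SimpleGraph.fromEdgeSet_adj _).1 hadj
    refine ⟨(d, u) :: c, .cons hends hwalk, List.forall_mem_cons.2 ⟨hd, hF⟩, ?_, ?_⟩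
    · rw [List.map_cons, List.map_cons, hedges, hends, SimpleGraph.Walk.edges_cons]
    · rw [List.map_cons, List.cons_append, hsupport, SimpleGraph.Walk.support_cons]

lemma exists_isWalk_isCycle_cons (he : e ∉ F) (hends : G.ends e = s(u, v))
    (hreach : (underlying G F).Reachable u v) :
    ∃ c, IsWalk G u c v ∧ (∀ st ∈ c, st.1 ∈ F) ∧ IsCycle G ((e, v) :: c) := by
  obtain ⟨w, hw⟩ := hreach.exists_isPath
  obtain ⟨c, hwalk, hF, hedges, hsupport⟩ := exists_isWalk_of_walk w
  have hclosed : IsWalk G v ((e, v) :: c) v := .cons (hends.trans Sym2.eq_swap) hwalk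
  have hfst : (c.map Prod.fst).Nodup := .of_map G.ends (hedges ▸ hw.isTrail.edges_nodup)
  have hsnd : (c.map Prod.snd ++ [v]).Nodup := hsupport ▸ hw.support_nodup
  refine ⟨c, hwalk, hF, isCycle_iff_isWalk.2
    ⟨List.cons_ne_nil _ _, ⟨v, hclosed⟩, List.nodup_cons.2 ⟨?_, hfst⟩, ?_⟩⟩
  · rw [List.mem_map]
    rintro ⟨st, hst, rfl⟩
    exact he (hF st hst)
  · exact List.nodup_append_comm.1 hsnd

lemma IsPotential.gain_eq_of_reachable (hp : IsPotential G p F) (he : e ∉ F)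
    (hbal : BalancedSet G (insert e F)) (hends : G.ends e = s(u, v))
    (hreach : (underlying G F).Reachable u v) : G.gain e = p u * p v := by
  obtain ⟨c, hwalk, hF, hcycle⟩ := exists_isWalk_isCycle_cons he hends hreach
  have hgain : G.gain e * cycleGain G c = 1 :=
    hbal _ hcycle <| List.forall_mem_cons.2
      ⟨Finset.mem_insert_self e F, fun st hst => Finset.mem_insert_of_mem (hF st hst)⟩
  rw [← hp.cycleGain_eq hwalk hF, eq_inv_of_mul_eq_one_left hgain, Int.units_inv_eq_self]

-- If the new edge joins two components, multiplying the potential by a sign on one of them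
-- corrects its gain and leaves all others unchanged.
lemma IsPotential.exists_insert_of_not_reachable (hp : IsPotential G p F)
    (hends : G.ends e = s(u, v)) (hreach : ¬(underlying G F).Reachable u v) :
    ∃ q, IsPotential G q (insert e F) := by
  classical
  let t : G.V → ℤˣ := fun x =>
    if (underlying G F).Reachable u x then G.gain e * (p u * p v) else 1
  have ht : ∀ d ∈ F, ∀ x y, G.ends d = s(x, y) → t x = t y := by
    intro d hd x y hxy
    have hr := underlying_reachable hd hxy
    have hiff : (underlying G F).Reachable u x ↔ (underlying G F).Reachable u y :=
      ⟨fun h => h.trans hr, fun h => h.trans hr.symm⟩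
    simp only [t, hiff]
  refine ⟨t * p, (hp.mul_left ht).insert hends ?_⟩
  have htu : t u = G.gain e * (p u * p v) := if_pos (.refl u)
  have htv : t v = 1 := if_neg hreach
  rw [Pi.mul_apply, Pi.mul_apply, htu, htv, one_mul, mul_assoc, mul_assoc, Int.units_mul_self,
    mul_one]

lemma BalancedSet.exists_isPotential (h : BalancedSet G F) : ∃ p, IsPotential G p F := by
  induction F using Finset.induction_on with
  | empty => exact ⟨1, by simp [IsPotential]⟩
  | insert e F he ih =>
    obtain ⟨p, hp⟩ := ih (h.mono (Finset.subset_insert e F))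
    obtain ⟨⟨u, v⟩, hends⟩ := Sym2.mk_surjective (G.ends e)
    by_cases hreach : (underlying G F).Reachable u v
    · exact ⟨p, hp.insert hends.symm (hp.gain_eq_of_reachable he h hends.symm hreach)⟩
    · exact hp.exists_insert_of_not_reachable hends.symm hreach

/-- A subgraph of a gain graph: a set of edges and a set of vertices containing their ends,
possibly together with isolated vertices. -/
structure Subgraph (G : GainGraph) where
  verts : Finset G.V
  edges : Finset G.E
  mem_verts : ∀ e ∈ edges, ∀ v ∈ G.ends e, v ∈ verts

lemma mem_endsFinset : v ∈ endsFinset G e ↔ v ∈ G.ends e := by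
  unfold endsFinset
  induction G.ends e with
  | _ a b => simp

namespace Subgraph

variable {H K : Subgraph G}

instance : Union (Subgraph G) where
  union H K :=
    { verts := H.verts ∪ K.verts
      edges := H.edges ∪ K.edges
      mem_verts := fun e he v hv => Finset.mem_union.2 <|
        (Finset.mem_union.1 he).imp (H.mem_verts e · v hv) (K.mem_verts e · v hv) }

instance : Inter (Subgraph G) where
  inter H K :=
    { verts := H.verts ∩ K.verts
      edges := H.edges ∩ K.edges
      mem_verts := fun e he v hv => Finset.mem_inter.2 <|
        (Finset.mem_inter.1 he).imp (H.mem_verts e · v hv) (K.mem_verts e · v hv) }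

/-- The part of a subgraph induced on a set of vertices. -/
def induce (H : Subgraph G) (P : Finset G.V) : Subgraph G where
  verts := H.verts ∩ P
  edges := H.edges.filter fun e => endsFinset G e ⊆ P
  mem_verts e he v hv :=
    have ⟨heH, heP⟩ := Finset.mem_filter.1 he
    Finset.mem_inter.2 ⟨H.mem_verts e heH v hv, heP (mem_endsFinset.2 hv)⟩

/-- The function `f` of sparsity counts: twice the number of vertices minus the number of edges,
as an integer. -/
def f (H : Subgraph G) : ℤ := 2 * (H.verts.card : ℤ) - H.edges.card

lemma f_union_add_f_inter (H K : Subgraph G) : (H ∪ K).f + (H ∩ K).f = H.f + K.f := by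
  have hV : (H ∪ K).verts.card + (H ∩ K).verts.card = H.verts.card + K.verts.card :=
    Finset.card_union_add_card_inter _ _
  have hE : (H ∪ K).edges.card + (H ∩ K).edges.card = H.edges.card + K.edges.card :=
    Finset.card_union_add_card_inter _ _
  unfold f
  omega

lemma f_induce_add_f_induce_compl (H : Subgraph G) (P : Finset G.V)
    (hP : ∀ e ∈ H.edges, ∀ u v, G.ends e = s(u, v) → (u ∈ P ↔ v ∈ P)) :
    (H.induce P).f + (H.induce Pᶜ).f = H.f := by
  have hcompl : (H.induce Pᶜ).edges = H.edges.filter fun e => ¬endsFinset G e ⊆ P := by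
    refine Finset.filter_congr fun e he => ?_
    obtain ⟨⟨u, v⟩, hends⟩ := Sym2.mk_surjective (G.ends e)
    have huv : u ∈ P ↔ v ∈ P := hP e he u v hends.symm
    simp [Finset.subset_iff, mem_endsFinset, ← hends, huv]
  have hE : (H.induce P).edges.card + (H.induce Pᶜ).edges.card = H.edges.card := by
    rw [hcompl]
    exact Finset.card_filter_add_card_filter_not _
  have hV : (H.induce P).verts.card + (H.induce Pᶜ).verts.card = H.verts.card := by
    simp only [induce, ← Finset.sdiff_eq_inter_compl]
    exact Finset.card_inter_add_card_sdiff _ _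
  unfold f
  omega

lemma vertsOf_edges_subset (H : Subgraph G) : vertsOf G H.edges ⊆ H.verts :=
  Finset.biUnion_subset.2 fun e he v hv => H.mem_verts e he v (mem_endsFinset.1 hv)

lemma isPotential_congr (H : Subgraph G) (hpq : ∀ v ∈ H.verts, p v = q v)
    (hp : IsPotential G p H.edges) : IsPotential G q H.edges := by
  intro e he u v huv
  have hu : u ∈ H.verts := H.mem_verts e he u (huv ▸ Sym2.mem_mk_left u v)
  have hv : v ∈ H.verts := H.mem_verts e he v (huv ▸ Sym2.mem_mk_right u v)
  rw [hp e he u v huv, hpq u hu, hpq v hv]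

lemma isPotential_union (hp : IsPotential G p H.edges) (hq : IsPotential G q K.edges)
    (hpq : ∀ v ∈ (H ∩ K).verts, p v = q v) :
    IsPotential G (H.verts.piecewise p q) (H ∪ K).edges := by
  have hH := H.isPotential_congr (q := H.verts.piecewise p q)
    (fun v hv => (H.verts.piecewise_eq_of_mem p q hv).symm) hp
  have hK := K.isPotential_congr (q := H.verts.piecewise p q) (fun v hv => by
    by_cases hvH : v ∈ H.verts
    · rw [H.verts.piecewise_eq_of_mem p q hvH, hpq v (Finset.mem_inter.2 ⟨hvH, hv⟩)]
    · rw [H.verts.piecewise_eq_of_notMem p q hvH]) hq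
  exact fun e he => (Finset.mem_union.1 he).elim (hH e) (hK e)

end Subgraph

namespace Sparse220

variable {H K : Subgraph G}

lemma f_nonneg (hG : Sparse220 G) (H : Subgraph G) : 0 ≤ H.f := by
  have hsparse := hG.2 H.edges
  have hcard := Finset.card_le_card H.vertsOf_edges_subset
  unfold Subgraph.f
  omega

lemma two_le_f (hG : Sparse220 G) (hne : H.verts.Nonempty) (hbal : BalancedSet G H.edges) :
    2 ≤ H.f := by
  have hpos := hne.card_pos
  have hcard := Finset.card_le_card H.vertsOf_edges_subset
  unfold Subgraph.f
  rcases H.edges.eq_empty_or_nonempty with hempty | hedges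
  · rw [hempty, Finset.card_empty]
    omega
  · have hsparse := hG.1 H.edges hedges hbal
    omega

lemma four_le_f_of_ne {α : Type*} (hG : Sparse220 G) (hbal : BalancedSet G H.edges) {r : G.V → α}
    (hr : ∀ e ∈ H.edges, ∀ u v, G.ends e = s(u, v) → r u = r v)
    (hu : u ∈ H.verts) (hv : v ∈ H.verts) (huv : r u ≠ r v) : 4 ≤ H.f := by
  classical
  let P : Finset G.V := Finset.univ.filter fun x => r x = r u
  have hmemP (x : G.V) : x ∈ P ↔ r x = r u := by simp [P]
  have hP : (H.induce P).f + (H.induce Pᶜ).f = H.f :=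
    H.f_induce_add_f_induce_compl P fun e he x y hxy => by
      rw [hmemP, hmemP, hr e he x y hxy]
  have huP : u ∈ (H.induce P).verts := Finset.mem_inter.2 ⟨hu, (hmemP u).2 rfl⟩
  have hvP : v ∈ (H.induce Pᶜ).verts :=
    Finset.mem_inter.2 ⟨hv, Finset.mem_compl.2 fun h => huv ((hmemP v).1 h).symm⟩
  have hin := hG.two_le_f ⟨u, huP⟩ (hbal.mono (Finset.filter_subset _ _))
  have hout := hG.two_le_f ⟨v, hvP⟩ (hbal.mono (Finset.filter_subset _ _))
  omega

lemma balancedSet_union_or_four_le_f_inter (hG : Sparse220 G)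
    (hH : BalancedSet G H.edges) (hK : BalancedSet G K.edges) :
    BalancedSet G (H ∪ K).edges ∨ 4 ≤ (H ∩ K).f := by
  obtain ⟨p, hp⟩ := hH.exists_isPotential
  obtain ⟨q, hq⟩ := hK.exists_isPotential
  by_cases hconst : ∃ a : ℤˣ, ∀ v ∈ (H ∩ K).verts, p v * q v = a
  · obtain ⟨a, ha⟩ := hconst
    have hq' : IsPotential G ((fun _ => a) * q) K.edges := hq.mul_left fun _ _ _ _ _ => rfl
    refine .inl (Subgraph.isPotential_union hp hq' fun v hv => ?_).balancedSet
    rw [Pi.mul_apply, ← ha v hv, mul_assoc, Int.units_mul_self, mul_one]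
  · obtain ⟨u, hu, v, hv, huv⟩ :
        ∃ u ∈ (H ∩ K).verts, ∃ v ∈ (H ∩ K).verts, p u * q u ≠ p v * q v := by
      by_contra! hall
      rcases (H ∩ K).verts.eq_empty_or_nonempty with hempty | ⟨u, hu⟩
      · exact hconst ⟨1, by simp [hempty]⟩
      · exact hconst ⟨p u * q u, fun v hv => hall v hv u hu⟩
    refine .inr (hG.four_le_f_of_ne (hH.mono Finset.inter_subset_left) (r := p * q) ?_ hu hv huv)
    intro e he x y hxy
    exact (hp.mono Finset.inter_subset_left).mul_eq_mul_of_ends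
      (hq.mono Finset.inter_subset_right) he hxy

end Sparse220

theorem union_inter_f_general {H K : Subgraph G} (hG : Sparse220 G)
    (hH : BalancedSet G H.edges) (hK : BalancedSet G K.edges)
    (hmeet : (H ∩ K).verts.Nonempty) (hfH : H.f = 2) (hfK : K.f = 2) :
    ((H ∩ K).f = 4 ∧ (H ∪ K).f = 0 ∨ (H ∪ K).f = 2 ∧ (H ∩ K).f = 2) ∧
      ((H ∪ K).f = 2 ∧ (H ∩ K).f = 2 ↔ BalancedSet G (H ∪ K).edges) := by
  have hmod := Subgraph.f_union_add_f_inter H K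
  have hunion := hG.f_nonneg (H ∪ K)
  have hinter := hG.two_le_f hmeet (hH.mono Finset.inter_subset_left)
  have hne : (H ∪ K).verts.Nonempty :=
    hmeet.mono (Finset.inter_subset_left.trans Finset.subset_union_left)
  have hunion_bal := hG.two_le_f hne
  rcases hG.balancedSet_union_or_four_le_f_inter hH hK with hbal | hfour
  · have := hunion_bal hbal
    exact ⟨.inr (by omega), iff_of_true (by omega) hbal⟩
  · refine ⟨.inl (by omega), iff_of_false (by omega) fun hbal => ?_⟩
    have := hunion_bal hbal
    omega

end

theorem union_inter_f (G : GainGraph)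
    (htight : Tight220 G)
    (SV' SV'' : Finset G.V) (SE' SE'' : Finset G.E)
    (hsub' : ∀ e ∈ SE', ∀ v ∈ G.ends e, v ∈ SV')
    (hsub'' : ∀ e ∈ SE'', ∀ v ∈ G.ends e, v ∈ SV'')
    (hbal' : BalancedSet G SE')
    (hbal'' : BalancedSet G SE'')
    (hmeet : (SV' ∩ SV'').Nonempty)
    (hf' : 2 * (SV'.card : ℤ) - SE'.card = 2)
    (hf'' : 2 * (SV''.card : ℤ) - SE''.card = 2) :
    ((2 * ((SV' ∩ SV'').card : ℤ) - ((SE' ∩ SE'').card : ℤ) = 4 ∧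
        2 * ((SV' ∪ SV'').card : ℤ) - ((SE' ∪ SE'').card : ℤ) = 0) ∨
      (2 * ((SV' ∪ SV'').card : ℤ) - ((SE' ∪ SE'').card : ℤ) = 2 ∧
        2 * ((SV' ∩ SV'').card : ℤ) - ((SE' ∩ SE'').card : ℤ) = 2)) ∧
    ((2 * ((SV' ∪ SV'').card : ℤ) - ((SE' ∪ SE'').card : ℤ) = 2 ∧
        2 * ((SV' ∩ SV'').card : ℤ) - ((SE' ∩ SE'').card : ℤ) = 2) ↔
      BalancedSet G (SE' ∪ SE'')) :=
  union_inter_f_general htight.1 (H := ⟨SV', SE', hsub'⟩) (K := ⟨SV'', SE'', hsub''⟩)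
    hbal' hbal'' hmeet hf' hf''

end ZGain
end
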